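/- arXiv:2107.03171 — 2 statements merged into one kernel-verified Lean document; each statement's English description precedes it below -/
import Mathlib

section
/- For every ε > 0 there exists N such that for all n ≥ N there exists a truly n-variate Boolean function f : {0,1}^n → {0,1} with pdeg(f) ≤ (log₂ n)^{1/2+ε}. -/
open scoped Classical

noncomputable def evalBool {ι : Type} (a : ι → Bool) (P : MvPolynomial ι ℝ) : ℝ :=
  MvPolynomial.eval (fun i => if a i then (1:ℝ) else 0) P

def HasProbPoly {ι : Type} (f : (ι → Bool) → Bool) (ε : ℝ) (d : ℕ) : Prop :=
  ∃ (k : ℕ) (w : Fin k → ℝ) (P : Fin k → MvPolynomial ι ℝ),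
    (∀ i, 0 ≤ w i) ∧ (∑ i, w i = 1) ∧ (∀ i, (P i).totalDegree ≤ d) ∧
    ∀ a : ι → Bool,
      ∑ i ∈ Finset.univ.filter
          (fun i => evalBool a (P i) ≠ (if f a then (1:ℝ) else 0)), w i ≤ ε

noncomputable def pdeg {ι : Type} (ε : ℝ) (f : (ι → Bool) → Bool) : ℕ :=
  sInf {d | HasProbPoly f ε d}

def TrulyVariate {ι : Type} (f : (ι → Bool) → Bool) : Prop :=
  ∀ i : ι, ∃ a, f (Function.update a i (!(a i))) ≠ f a

def ORf (n : ℕ) : (Fin n → Bool) → Bool := fun a => decide (∃ i, a i = true)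

noncomputable def sensitivity {n : ℕ} (f : (Fin n → Bool) → Bool) : ℕ :=
  Finset.univ.sup (fun a : Fin n → Bool =>
    (Finset.univ.filter (fun i : Fin n => f (Function.update a i (!(a i))) ≠ f a)).card)

theorem evalBool_mul {ι : Type} (a : ι → Bool) (P Q : MvPolynomial ι ℝ) :
    evalBool a (P * Q) = evalBool a P * evalBool a Q := by simp [evalBool]

/-- Uniform families give probabilistic polynomials. -/
theorem hasProbPoly_of_uniform {ι : Type} (f : (ι → Bool) → Bool) (ε : ℝ) (d : ℕ)
    (Ω : Type) [Fintype Ω] [Nonempty Ω] (P : Ω → MvPolynomial ι ℝ)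
    (hd : ∀ ω, (P ω).totalDegree ≤ d)
    (h : ∀ a : ι → Bool, ((Finset.univ.filter
      (fun ω => evalBool a (P ω) ≠ (if f a then (1:ℝ) else 0))).card : ℝ) ≤ ε * Fintype.card Ω) :
    HasProbPoly f ε d := by
  have hpos : (0:ℝ) < Fintype.card Ω := by exact_mod_cast Fintype.card_pos
  let e := (Fintype.equivFin Ω).symm
  refine ⟨Fintype.card Ω, fun _ => 1 / Fintype.card Ω, fun i => P (e i), ?_, ?_, ?_, ?_⟩
  · intro i; positivity
  · simp
  · intro i; exact hd _
  · intro a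
    rw [Finset.sum_const, nsmul_eq_mul]
    have : (Finset.univ.filter (fun i => evalBool a (P (e i)) ≠ (if f a then (1:ℝ) else 0))).card
        = (Finset.univ.filter
      (fun ω => evalBool a (P ω) ≠ (if f a then (1:ℝ) else 0))).card := by
      apply Finset.card_bij (fun i _ => e i)
      · intro i hi; simpa using hi
      · intro i _ j _ hij; exact e.injective hij
      · intro b hb; exact ⟨e.symm b, by simpa using hb, by simp⟩
    rw [this, mul_one_div, div_le_iff₀ hpos]
    exact h a

/-- Transport along an equivalence of the variable sets. -/
theorem hasProbPoly_equiv {ι κ : Type} (σ : ι ≃ κ) (f : (ι → Bool) → Bool) (ε : ℝ) (d : ℕ)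
    (h : HasProbPoly f ε d) : HasProbPoly (fun a : κ → Bool => f (a ∘ σ)) ε d := by
  obtain ⟨k, w, P, h1, h2, h3, h4⟩ := h
  refine ⟨k, w, fun i => MvPolynomial.rename σ (P i), h1, h2, ?_, ?_⟩
  · intro i; exact (MvPolynomial.totalDegree_rename_le _ _).trans (h3 i)
  · intro a
    have := h4 (a ∘ σ)
    have e : ∀ i, evalBool a (MvPolynomial.rename σ (P i)) = evalBool (a ∘ σ) (P i) := by
      intro i
      simp only [evalBool, MvPolynomial.eval_rename]
      rfl
    simpa only [e] using this

theorem trulyVariate_equiv {ι κ : Type} (σ : ι ≃ κ) (f : (ι → Bool) → Bool)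
    (h : TrulyVariate f) : TrulyVariate (fun a : κ → Bool => f (a ∘ σ)) := by
  intro j
  obtain ⟨b, hb⟩ := h (σ.symm j)
  refine ⟨b ∘ σ.symm, ?_⟩
  have e1 : (b ∘ σ.symm) ∘ σ = b := by ext x; simp
  have e2 : (Function.update (b ∘ σ.symm) j (!((b ∘ σ.symm) j))) ∘ σ
      = Function.update b (σ.symm j) (!(b (σ.symm j))) := by
    ext x
    by_cases hx : x = σ.symm j
    · subst hx; simp
    · have : σ x ≠ j := fun h => hx (by simp [← h])
      simp [Function.update, hx, this]
  simp only [e1, e2]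
  exact hb

/-- Failure bound. -/
noncomputable def failB (K w : ℕ) : ℝ :=
  if w = 0 then 1 else if w ≤ 2 then 0 else 1/7 + w / 2^K

theorem failB_le (K w : ℕ) :
    failB K w ≤ 1/7 + w/2^K + 6/7 * (if w = 0 then 1 else 0)
      - 1/7 * (if w = 1 ∨ w = 2 then 1 else 0) := by
  unfold failB
  have : (0:ℝ) ≤ w / 2^K := by positivity
  by_cases h0 : w = 0
  · simp [h0]; norm_num
  · by_cases h2 : w ≤ 2
    · have : w = 1 ∨ w = 2 := by omega
      simp only [h0, h2, this, if_true, if_false]; linarith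
    · have : ¬ (w = 1 ∨ w = 2) := by omega
      simp only [h0, h2, this, if_false]; linarith

theorem sum_inter_card {E : Type} [Fintype E] (V : Finset E) :
    ∑ S : Finset E, ((V ∩ S).card : ℝ) = Fintype.card (Finset E) * (V.card / 2) := by
  have h1 : ∑ S : Finset E, ((V ∩ Sᶜ).card : ℝ) = ∑ S : Finset E, ((V ∩ S).card : ℝ) :=
    Equiv.sum_comp (Equiv.mk (fun S : Finset E => Sᶜ) (fun S => Sᶜ)
      (fun S => compl_compl S) (fun S => compl_compl S)) (fun S => ((V ∩ S).card : ℝ))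
  have h2 : ∑ S : Finset E, (((V ∩ S).card : ℝ) + ((V ∩ Sᶜ).card : ℝ))
      = ∑ S : Finset E, (V.card : ℝ) := by
    apply Finset.sum_congr rfl
    intro S _
    rw [← Finset.sdiff_eq_inter_compl]
    exact_mod_cast Finset.card_inter_add_card_sdiff V S
  rw [Finset.sum_add_distrib, h1, Finset.sum_const, nsmul_eq_mul, Finset.card_univ] at h2
  linarith

theorem six_le {E : Type} [Fintype E] (V : Finset E) (hV : 3 ≤ V.card) :
    6 * (Finset.univ.filter (fun S : Finset E => (V ∩ S).card = 0)).card ≤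
    (Finset.univ.filter (fun S : Finset E => (V ∩ S).card = 1 ∨ (V ∩ S).card = 2)).card := by
  obtain ⟨W, hWV, hW⟩ := Finset.exists_subset_card_eq hV
  have hU : (Finset.powersetCard 1 W ∪ Finset.powersetCard 2 W).card = 6 := by
    rw [Finset.card_union_of_disjoint]
    · simp [Finset.card_powersetCard, hW]
    · rw [Finset.disjoint_left]
      intro U h1 h2
      rw [Finset.mem_powersetCard] at h1 h2
      omega
  rw [← hU, ← Finset.card_product]
  have key : ∀ U S : Finset E, U ∈ Finset.powersetCard 1 W ∪ Finset.powersetCard 2 W →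
      (V ∩ S).card = 0 → V ∩ (S ∪ U) = U ∧ (S ∪ U) \ V = S ∧ (U.card = 1 ∨ U.card = 2) := by
    intro U S hU hS
    rw [Finset.card_eq_zero] at hS
    have hUW : U ⊆ W ∧ (U.card = 1 ∨ U.card = 2) := by
      rw [Finset.mem_union, Finset.mem_powersetCard, Finset.mem_powersetCard] at hU
      tauto
    have hUV := hUW.1.trans hWV
    have hd : ∀ x, x ∈ V → x ∉ S := by
      intro x hx hxS
      have : x ∈ V ∩ S := Finset.mem_inter.2 ⟨hx, hxS⟩
      rw [hS] at this; simp at this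
    refine ⟨?_, ?_, hUW.2⟩
    · ext x
      simp only [Finset.mem_inter, Finset.mem_union]
      have := hd x; have := @hUV x
      tauto
    · ext x
      simp only [Finset.mem_sdiff, Finset.mem_union]
      have := hd x; have := @hUV x
      tauto
  apply Finset.card_le_card_of_injOn (fun p => p.2 ∪ p.1)
  · rintro ⟨U, S⟩ h
    simp only [Finset.coe_product, Set.mem_prod, Finset.mem_coe, Finset.mem_filter,
      Finset.mem_univ, true_and] at h ⊢
    obtain ⟨k1, k2, k3⟩ := key U S h.1 h.2
    rw [k1]; exact k3
  · rintro ⟨U, S⟩ h ⟨U', S'⟩ h' heq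
    simp only [Finset.coe_product, Set.mem_prod, Finset.mem_coe, Finset.mem_filter,
      Finset.mem_univ, true_and] at h h' heq
    obtain ⟨k1, k2, k3⟩ := key U S h.1 h.2
    obtain ⟨k1', k2', k3'⟩ := key U' S' h'.1 h'.2
    rw [Prod.mk.injEq]
    constructor
    · rw [← k1, ← k1', heq]
    · rw [← k2, ← k2', heq]

theorem sum_failB {E : Type} [Fintype E] (V : Finset E) (hV : 3 ≤ V.card) (K : ℕ) :
    ∑ S : Finset E, failB K (V ∩ S).card ≤ Fintype.card (Finset E) * failB (K+1) V.card := by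
  have h6 := six_le V hV
  have h6' : (6:ℝ) * (Finset.univ.filter (fun S : Finset E => (V ∩ S).card = 0)).card ≤
    (Finset.univ.filter
      (fun S : Finset E => (V ∩ S).card = 1 ∨ (V ∩ S).card = 2)).card := by exact_mod_cast h6
  have e : failB (K+1) V.card = 1/7 + V.card / 2^(K+1) := by
    unfold failB
    rw [if_neg (by omega), if_neg (by omega)]
  calc _ ≤ ∑ S : Finset E, (1/7 + ((V ∩ S).card : ℝ)/2^K
        + 6/7 * (if (V ∩ S).card = 0 then 1 else 0)
      - 1/7 * (if (V ∩ S).card = 1 ∨ (V ∩ S).card = 2 then 1 else 0)) :=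
        Finset.sum_le_sum (fun S _ => failB_le K _)
    _ = Fintype.card (Finset E) * (1/7) + (Fintype.card (Finset E) * (V.card / 2)) / 2^K
        + 6/7 * (Finset.univ.filter (fun S : Finset E => (V ∩ S).card = 0)).card
        - 1/7 * (Finset.univ.filter
      (fun S : Finset E => (V ∩ S).card = 1 ∨ (V ∩ S).card = 2)).card := by
        rw [Finset.sum_sub_distrib, Finset.sum_add_distrib, Finset.sum_add_distrib,
          ← Finset.mul_sum, ← Finset.mul_sum,
          ← Finset.sum_div Finset.univ (fun S : Finset E => ((V ∩ S).card : ℝ)), sum_inter_card,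
          Finset.sum_boole, Finset.sum_boole, Finset.sum_const, nsmul_eq_mul, Finset.card_univ]
    _ ≤ Fintype.card (Finset E) * (1/7) + (Fintype.card (Finset E) * (V.card / 2)) / 2^K := by
        linarith
    _ = _ := by rw [e, pow_succ]; field_simp

/-- The basic factor. -/
noncomputable def phiPoly {ι E : Type} (m : E → MvPolynomial ι ℝ) (T : Finset E) :
    MvPolynomial ι ℝ :=
  (1 - ∑ e ∈ T, m e) * (1 - MvPolynomial.C (1/2) * ∑ e ∈ T, m e)

theorem phiPoly_degree {ι E : Type} (m : E → MvPolynomial ι ℝ) (D : ℕ)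
    (hm : ∀ e, (m e).totalDegree ≤ D) (T : Finset E) :
    (phiPoly m T).totalDegree ≤ 2 * D := by
  have h1 : (∑ e ∈ T, m e).totalDegree ≤ D :=
    MvPolynomial.totalDegree_finsetSum_le (fun e _ => hm e)
  have h2 : (MvPolynomial.C (1/2) * ∑ e ∈ T, m e : MvPolynomial ι ℝ).totalDegree ≤ D := by
    refine (MvPolynomial.totalDegree_mul _ _).trans ?_
    simpa using h1
  have h3 : (1 - ∑ e ∈ T, m e).totalDegree ≤ D :=
    (MvPolynomial.totalDegree_sub _ _).trans (by simpa using h1)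
  have h4 : (1 - MvPolynomial.C (1/2) * ∑ e ∈ T, m e : MvPolynomial ι ℝ).totalDegree ≤ D :=
    (MvPolynomial.totalDegree_sub _ _).trans (max_le (by simp) h2)
  refine (MvPolynomial.totalDegree_mul _ _).trans ?_
  omega

theorem phiPoly_eval {ι E : Type} (m : E → MvPolynomial ι ℝ) (T : Finset E) (a : ι → Bool)
    (b : E → Prop) (hb : ∀ e, evalBool a (m e) = if b e then 1 else 0) :
    evalBool a (phiPoly m T) =
      (1 - ((T.filter b).card : ℝ)) * (1 - 1/2 * ((T.filter b).card : ℝ)) := by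
  have : evalBool a (∑ e ∈ T, m e) = ((T.filter b).card : ℝ) := by
    have : evalBool a (∑ e ∈ T, m e) = ∑ e ∈ T, evalBool a (m e) := by simp [evalBool]
    rw [this]; simp only [hb]; rw [Finset.sum_boole]
  unfold phiPoly
  rw [← this]
  simp [evalBool]

/-- Probabilistic polynomial for NOR of the quantities `m e`. -/
theorem nor_family {ι E : Type} [Fintype E] (m : E → MvPolynomial ι ℝ) (D : ℕ)
    (hm : ∀ e, (m e).totalDegree ≤ D) (b : (ι → Bool) → E → Prop)
    (hb : ∀ a e, evalBool a (m e) = if b a e then 1 else 0) (K : ℕ) :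
    ∃ (Ω : Type) (_ : Fintype Ω) (_ : Nonempty Ω) (P : Ω → Finset E → MvPolynomial ι ℝ),
      (∀ ω T, (P ω T).totalDegree ≤ 2 * D * (K+1)) ∧
      ∀ a T, ((T.filter (b a)) = ∅ → ∀ ω, evalBool a (P ω T) = 1) ∧
        ((Finset.univ.filter (fun ω => evalBool a (P ω T) ≠ 0)).card : ℝ)
          ≤ failB K (T.filter (b a)).card * Fintype.card Ω := by
  induction K with
  | zero =>
    refine ⟨Unit, inferInstance, inferInstance, fun _ T => phiPoly m T, ?_, ?_⟩
    · intro _ T; simpa using phiPoly_degree m D hm T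
    · intro a T
      have he := phiPoly_eval m T a (b a) (hb a)
      refine ⟨fun h _ => by simp [he, h], ?_⟩
      simp only [he]
      generalize (T.filter (b a)).card = w
      by_cases h2 : w = 1 ∨ w = 2
      · rcases h2 with rfl | rfl <;> simp [failB]
      · have h1 : (1:ℝ) ≤ failB 0 w := by
          unfold failB
          by_cases h0 : w = 0
          · simp [h0]
          · rw [if_neg h0, if_neg (by omega)]
            have : (1:ℝ) ≤ w := by exact_mod_cast Nat.one_le_iff_ne_zero.2 h0
            norm_num; linarith
        refine le_trans ?_ (by simpa using h1)
        exact_mod_cast (Finset.card_le_univ _).trans (by simp)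
  | succ K ih =>
    obtain ⟨Ω, i1, i2, P, hP, hE⟩ := ih
    refine ⟨Finset E × Ω, inferInstance, inferInstance,
      fun p T => phiPoly m T * P p.2 (T ∩ p.1), ?_, ?_⟩
    · rintro ⟨S, ω⟩ T
      refine (MvPolynomial.totalDegree_mul _ _).trans ?_
      have := phiPoly_degree m D hm T
      have := hP ω (T ∩ S)
      simp only
      nlinarith
    · intro a T
      have he := phiPoly_eval m T a (b a) (hb a)
      have hf : ∀ S, (T ∩ S).filter (b a) = T.filter (b a) ∩ S := by
        intro S; ext x; simp only [Finset.mem_filter, Finset.mem_inter]; tauto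
      constructor
      · rintro h ⟨S, ω⟩
        rw [evalBool_mul, he, h, (hE a (T ∩ S)).1 (by rw [hf, h]; simp)]
        simp
      · have hcard : ((Finset.univ.filter (fun p : Finset E × Ω =>
            evalBool a (phiPoly m T * P p.2 (T ∩ p.1)) ≠ 0)).card : ℝ) ≤
            ∑ S : Finset E, ((Finset.univ.filter
              (fun ω => evalBool a (P ω (T ∩ S)) ≠ 0)).card : ℝ) := by
          have : (Finset.univ.filter (fun p : Finset E × Ω =>
            evalBool a (phiPoly m T * P p.2 (T ∩ p.1)) ≠ 0)).card ≤
            (Finset.univ.sigma (fun S : Finset E => (Finset.univ.filter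
              (fun ω => evalBool a (P ω (T ∩ S)) ≠ 0)))).card := by
            apply Finset.card_le_card_of_injOn (fun p => ⟨p.1, p.2⟩)
            · rintro ⟨S, ω⟩ h
              simp only [Finset.coe_filter, Finset.mem_univ, true_and, Set.mem_ofPred_eq,
                evalBool_mul] at h
              simp [right_ne_zero_of_mul h]
            · rintro ⟨S, ω⟩ _ ⟨S', ω'⟩ _ h
              simpa using h
          rw [Finset.card_sigma] at this
          exact_mod_cast this
        by_cases h0 : (T.filter (b a)).card = 0
        · have : failB (K+1) (T.filter (b a)).card = 1 := by simp [failB, h0]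
          rw [this, one_mul]
          exact_mod_cast Finset.card_le_univ _
        by_cases h3 : 3 ≤ (T.filter (b a)).card
        · refine hcard.trans ?_
          calc _ ≤ ∑ S : Finset E, failB K (T.filter (b a) ∩ S).card * Fintype.card Ω := by
                apply Finset.sum_le_sum
                intro S _
                have := (hE a (T ∩ S)).2
                rwa [hf] at this
            _ = (∑ S : Finset E, failB K (T.filter (b a) ∩ S).card) * Fintype.card Ω := by
                rw [Finset.sum_mul]
            _ ≤ (Fintype.card (Finset E) * failB (K+1) (T.filter (b a)).card)
                * Fintype.card Ω := by
                gcongr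
                exact sum_failB _ h3 K
            _ = _ := by rw [Fintype.card_prod]; push_cast; ring
        · have hz : evalBool a (phiPoly m T) = 0 := by
            rw [he]
            have : (T.filter (b a)).card = 1 ∨ (T.filter (b a)).card = 2 := by omega
            rcases this with h | h <;> rw [h] <;> norm_num
          have h2 : failB (K+1) (T.filter (b a)).card = 0 := by
            unfold failB; rw [if_neg h0, if_pos (by omega)]
          rw [h2]
          simp [evalBool_mul, hz]

/-- The function: unary block addressing. -/
noncomputable def addrF {r s : ℕ} (A : Finset (Fin r → Fin s)) :
    (((Fin r × Fin s) ⊕ A) → Bool) → Bool := fun a =>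
  decide ((∀ j i i', a (Sum.inl (j, i)) = true → a (Sum.inl (j, i')) = true → i = i') ∧
    ∃ α : A, (∀ j, a (Sum.inl (j, α.1 j)) = true) ∧ a (Sum.inr α) = true)

theorem addrF_truly {r s : ℕ} (A : Finset (Fin r → Fin s))
    (hA : ∀ i, (fun _ => i) ∈ A) : TrulyVariate (addrF A) := by
  have main : ∀ (α : A) (v : (Fin r × Fin s) ⊕ A),
      ((∃ j, v = Sum.inl (j, α.1 j)) ∨ v = Sum.inr α) →
      ∃ a, addrF A (Function.update a v (!(a v))) ≠ addrF A a := by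
    intro α v hv
    let a : ((Fin r × Fin s) ⊕ A) → Bool :=
      Sum.elim (fun p => decide (p.2 = α.1 p.1)) (fun _ => true)
    have hav : a v = true := by
      rcases hv with ⟨j, rfl⟩ | rfl <;> simp [a]
    refine ⟨a, ?_⟩
    have h1 : addrF A a = true := by
      simp only [addrF, decide_eq_true_eq]
      refine ⟨?_, α, ?_, ?_⟩
      · intro j i i' h h'
        simp [a] at h h'
        rw [h, h']
      · intro j; simp [a]
      · simp [a]
    have h2 : addrF A (Function.update a v (!(a v))) = false := by
      simp only [addrF, decide_eq_false_iff_not]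
      rintro ⟨-, β, hβ, hβ'⟩
      have mono : ∀ u, Function.update a v (!(a v)) u = true → u ≠ v ∧ a u = true := by
        intro u hu
        by_cases huv : u = v
        · subst huv; simp [hav] at hu
        · exact ⟨huv, by simpa [Function.update, huv] using hu⟩
      have hβα : β = α := by
        apply Subtype.ext
        funext j
        have := (mono _ (hβ j)).2
        simpa [a] using this
      subst hβα
      rcases hv with ⟨j, rfl⟩ | rfl
      · exact (mono _ (hβ j)).1 rfl
      · exact (mono _ hβ').1 rfl
    rw [h1, h2]; simp
  rintro (⟨j, i⟩ | α)
  · convert main ⟨_, hA i⟩ (Sum.inl (j, i)) (Or.inl ⟨j, rfl⟩)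
  · convert main α (Sum.inr α) (Or.inr rfl)

theorem addrF_prob {r s : ℕ} (A : Finset (Fin r → Fin s)) (K : ℕ)
    (hK : r * s * s * 8 ≤ 2^K) :
    HasProbPoly (addrF A) (1/3) (4 * (K+1) + (r+1)) := by
  let m : Fin r × Fin s × Fin s → MvPolynomial ((Fin r × Fin s) ⊕ A) ℝ := fun e =>
    if e.2.1 = e.2.2 then 0 else
      MvPolynomial.X (Sum.inl (e.1, e.2.1)) * MvPolynomial.X (Sum.inl (e.1, e.2.2))
  obtain ⟨b, hbd⟩ : ∃ b : (((Fin r × Fin s) ⊕ A) → Bool) → (Fin r × Fin s × Fin s) → Prop,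
      ∀ a e, b a e ↔ (e.2.1 ≠ e.2.2 ∧ a (Sum.inl (e.1, e.2.1)) = true ∧
        a (Sum.inl (e.1, e.2.2)) = true) := ⟨_, fun _ _ => Iff.rfl⟩
  have hm : ∀ e, (m e).totalDegree ≤ 2 := by
    intro e
    simp only [m]
    split_ifs
    · simp
    · exact (MvPolynomial.totalDegree_mul _ _).trans (by simp)
  have hb : ∀ a e, evalBool a (m e) = if b a e then 1 else 0 := by
    rintro a ⟨j, i, i'⟩
    simp only [m, hbd]
    by_cases h : i = i'
    · simp [h, evalBool]
    · simp only [h, if_false, evalBool, map_mul, MvPolynomial.eval_X]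
      by_cases h1 : a (Sum.inl (j, i)) = true <;> by_cases h2 : a (Sum.inl (j, i')) = true <;>
        simp [h1, h2, h]
  obtain ⟨Ω, i1, i2, P, hP, hE⟩ := nor_family m 2 hm b hb K
  let Q : MvPolynomial ((Fin r × Fin s) ⊕ A) ℝ :=
    ∑ α : A, (∏ j, MvPolynomial.X (Sum.inl (j, α.1 j))) * MvPolynomial.X (Sum.inr α)
  have hQ : Q.totalDegree ≤ r + 1 := by
    apply MvPolynomial.totalDegree_finsetSum_le
    intro α _
    refine (MvPolynomial.totalDegree_mul _ _).trans ?_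
    have : (∏ j, MvPolynomial.X (Sum.inl (j, α.1 j)) :
        MvPolynomial ((Fin r × Fin s) ⊕ A) ℝ).totalDegree ≤ r := by
      refine (MvPolynomial.totalDegree_finsetProd _ _).trans ?_
      simp
    simp only [MvPolynomial.totalDegree_X]
    omega
  have hQe : ∀ a, evalBool a Q = ∑ α : A,
      if ((∀ j, a (Sum.inl (j, α.1 j)) = true) ∧ a (Sum.inr α) = true) then (1:ℝ) else 0 := by
    intro a
    simp only [Q, evalBool, map_sum, map_mul, map_prod, MvPolynomial.eval_X]
    apply Finset.sum_congr rfl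
    intro α _
    rw [Finset.prod_ite_zero]
    simp only [Finset.mem_univ, true_implies, Finset.prod_const_one]
    by_cases h1 : (∀ j, a (Sum.inl (j, α.1 j)) = true) <;>
      by_cases h2 : a (Sum.inr α) = true <;> simp [h1, h2]
  apply hasProbPoly_of_uniform _ _ _ Ω (fun ω => P ω Finset.univ * Q)
  · intro ω
    refine (MvPolynomial.totalDegree_mul _ _).trans ?_
    have := hP ω Finset.univ
    omega
  · intro a
    by_cases hv : ∀ j i i', a (Sum.inl (j, i)) = true → a (Sum.inl (j, i')) = true → i = i'
    · have hV : Finset.univ.filter (b a) = ∅ := by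
        rw [Finset.filter_eq_empty_iff]
        rintro ⟨j, i, i'⟩ _ hbe
        obtain ⟨h1, h2, h3⟩ := (hbd _ _).1 hbe
        exact h1 (hv j i i' h2 h3)
      have hval : evalBool a Q = if addrF A a then 1 else 0 := by
        rw [hQe]
        by_cases hex : ∃ α : A, (∀ j, a (Sum.inl (j, α.1 j)) = true) ∧ a (Sum.inr α) = true
        · have : addrF A a = true := by
            simp only [addrF, decide_eq_true_eq]; exact ⟨hv, hex⟩
          rw [this]
          obtain ⟨α, hα⟩ := hex
          rw [Finset.sum_eq_single α]
          · rw [if_pos hα]; simp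
          · intro β _ hβ
            rw [if_neg]
            rintro ⟨h1, -⟩
            apply hβ
            apply Subtype.ext
            funext j
            exact hv j _ _ (h1 j) (hα.1 j)
          · simp
        · have : addrF A a = false := by
            simp only [addrF, decide_eq_false_iff_not]
            exact fun h => hex h.2
          rw [this]
          push Not at hex
          simp only [Bool.false_eq_true, if_false]
          apply Finset.sum_eq_zero
          intro α _
          rw [if_neg]
          rintro ⟨h1, h2⟩
          exact hex α h1 h2
      have : Finset.univ.filter (fun ω => evalBool a (P ω Finset.univ * Q)
          ≠ (if addrF A a then (1:ℝ) else 0)) = ∅ := by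
        rw [Finset.filter_eq_empty_iff]
        intro ω _
        rw [evalBool_mul, (hE a Finset.univ).1 hV ω, hval, one_mul]
        simp
      rw [this]
      simp
    · have hf : addrF A a = false := by
        simp only [addrF, decide_eq_false_iff_not]
        exact fun h => hv h.1
      have hle := (hE a Finset.univ).2
      have hne : (Finset.univ.filter (b a)).card ≠ 0 := by
        push Not at hv
        obtain ⟨j, i, i', h1, h2, h3⟩ := hv
        rw [Finset.card_ne_zero]
        exact ⟨(j, i, i'), by simp [hbd, h1, h2, h3]⟩
      have hcard : (Finset.univ.filter (b a)).card ≤ r * s * s := by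
        refine (Finset.card_le_univ _).trans ?_
        simp [Fintype.card_prod, mul_assoc]
      have hB : failB K (Finset.univ.filter (b a)).card ≤ 1/3 := by
        unfold failB
        rw [if_neg hne]
        split_ifs
        · norm_num
        · have : ((Finset.univ.filter (b a)).card : ℝ) / 2^K ≤ 1/8 := by
            rw [div_le_iff₀ (by positivity)]
            have h : ((Finset.univ.filter (b a)).card : ℝ) * 8 ≤ 2^K := by
              exact_mod_cast (Nat.mul_le_mul_right 8 hcard).trans hK
            linarith
          linarith
      calc _ ≤ ((Finset.univ.filter (fun ω => evalBool a (P ω Finset.univ) ≠ 0)).card : ℝ) := by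
            norm_cast
            apply Finset.card_le_card
            intro ω h
            simp only [Finset.mem_filter, Finset.mem_univ, true_and, evalBool_mul, hf] at h ⊢
            intro h0
            apply h
            simp [h0]
        _ ≤ _ := hle
        _ ≤ _ := by gcongr

theorem exists_fun (n r : ℕ) (hr : 4 ≤ r) (h1 : 2^((r-1)^2) ≤ n) (h2 : n ≤ 2^(r^2)) :
    ∃ f : (Fin n → Bool) → Bool, TrulyVariate f ∧ pdeg (1/3) f ≤ 18 * r := by
  have hlt : r < 2^r := Nat.lt_two_pow_self
  have hrs : r * 2^r + 2^r ≤ n := by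
    refine le_trans ?_ h1
    calc r * 2^r + 2^r = (r+1) * 2^r := by ring
      _ ≤ 2^r * 2^r := Nat.mul_le_mul_right _ hlt
      _ = 2^(r+r) := by rw [pow_add]
      _ ≤ 2^((r-1)^2) := by
        apply Nat.pow_le_pow_right (by norm_num)
        obtain ⟨t, rfl⟩ := Nat.exists_eq_add_of_le hr
        have : 4 + t - 1 = 3 + t := by omega
        rw [this]; nlinarith
  let C : Finset (Fin r → Fin (2^r)) := Finset.univ.image (fun i => fun _ => i)
  have hC : C.card ≤ n - r * 2^r := by
    refine Finset.card_image_le.trans ?_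
    simp; omega
  have hU : n - r * 2^r ≤ (Finset.univ : Finset (Fin r → Fin (2^r))).card := by
    have : (2^r)^r = 2^(r^2) := by rw [← pow_mul, sq]
    simp only [Finset.card_univ, Fintype.card_fun, Fintype.card_fin, this]
    omega
  obtain ⟨A, hCA, -, hA⟩ := Finset.exists_subsuperset_card_eq (Finset.subset_univ C) hC hU
  have hcard : Fintype.card ((Fin r × Fin (2^r)) ⊕ A) = Fintype.card (Fin n) := by
    simp only [Fintype.card_sum, Fintype.card_prod, Fintype.card_fin, Fintype.card_coe, hA]
    omega
  let σ := Fintype.equivOfCardEq hcard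
  refine ⟨fun a => addrF A (a ∘ σ), trulyVariate_equiv σ _ (addrF_truly A ?_), ?_⟩
  · intro i
    exact hCA (Finset.mem_image.2 ⟨i, Finset.mem_univ _, rfl⟩)
  · have hK : r * 2^r * 2^r * 8 ≤ 2^(3*r+3) := by
      calc r * 2^r * 2^r * 8 ≤ 2^r * 2^r * 2^r * 8 := by gcongr
        _ = 2^(3*r+3) := by ring
    have := hasProbPoly_equiv σ _ _ _ (addrF_prob A (3*r+3) hK)
    refine (Nat.sInf_le this).trans ?_
    omega

theorem unconditional_upper_bound :
    ∀ ε : ℝ, 0 < ε → ∃ N : ℕ, ∀ n : ℕ, N ≤ n →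
      ∃ f : (Fin n → Bool) → Bool, TrulyVariate f ∧
        (pdeg (1/3) f : ℝ) ≤ (Real.logb 2 n) ^ ((1:ℝ)/2 + ε) := by
  intro ε hε
  have hL : Filter.Tendsto (fun n : ℕ => Real.logb 2 n) Filter.atTop Filter.atTop :=
    (Real.tendsto_logb_atTop (by norm_num)).comp tendsto_natCast_atTop_atTop
  have hLε := (tendsto_rpow_atTop hε).comp hL
  have hev := ((hL.eventually_ge_atTop 16).and (hLε.eventually_ge_atTop 36)).and
    (Filter.eventually_ge_atTop 1)
  obtain ⟨N, hN⟩ := Filter.eventually_atTop.1 hev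
  refine ⟨N, fun n hn => ?_⟩
  obtain ⟨⟨h16, h36⟩, hn1⟩ := hN n hn
  simp only [Function.comp] at h36
  set L := Real.logb 2 n with hLdef
  have hnpos : (0:ℝ) < n := by exact_mod_cast hn1
  have hnL : (n:ℝ) = 2 ^ L := (Real.rpow_logb (by norm_num) (by norm_num) hnpos).symm
  have hs0 : 0 ≤ Real.sqrt L := Real.sqrt_nonneg _
  have hsq : Real.sqrt L ^ 2 = L := Real.sq_sqrt (by linarith)
  have hs4 : 4 ≤ Real.sqrt L := Real.le_sqrt_of_sq_le (by linarith)
  obtain ⟨r, hr⟩ : ∃ r, r = ⌈Real.sqrt L⌉₊ := ⟨_, rfl⟩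
  have hr1 : Real.sqrt L ≤ r := hr ▸ Nat.le_ceil _
  have hr2 : (r:ℝ) < Real.sqrt L + 1 := hr ▸ Nat.ceil_lt_add_one hs0
  have hr4 : 4 ≤ r := by
    have : (4:ℝ) ≤ r := hs4.trans hr1
    exact_mod_cast this
  obtain ⟨f, hf, hd⟩ := exists_fun n r hr4 (by
      have : ((2^((r-1)^2) : ℕ) : ℝ) ≤ n := by
        rw [hnL]
        push_cast
        rw [← Real.rpow_natCast]
        apply Real.rpow_le_rpow_of_exponent_le (by norm_num)
        rw [← hsq, Nat.cast_pow, Nat.cast_sub (by omega)]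
        apply pow_le_pow_left₀
        · push_cast; linarith
        · push_cast; linarith
      exact_mod_cast this) (by
      have : (n : ℝ) ≤ ((2^(r^2) : ℕ) : ℝ) := by
        rw [hnL]
        push_cast
        rw [← Real.rpow_natCast]
        apply Real.rpow_le_rpow_of_exponent_le (by norm_num)
        rw [← hsq, Nat.cast_pow]
        exact pow_le_pow_left₀ hs0 hr1 2
      exact_mod_cast this)
  refine ⟨f, hf, ?_⟩
  have hd' : (pdeg (1/3) f : ℝ) ≤ 18 * r := by exact_mod_cast hd
  rw [Real.rpow_add (by linarith), ← Real.sqrt_eq_rpow]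
  have : Real.sqrt L * 36 ≤ Real.sqrt L * L ^ ε := mul_le_mul_of_nonneg_left h36 hs0
  linarith
end

section
/- Let c > 0 and a > 0, and suppose pdeg(OR_m) ≥ a·(log₂ m)^c for all m ≥ 2. Then there exists a′ > 0 such that for all n ≥ 4, every truly n-variate Boolean function f : {0,1}^n → {0,1} satisfies pdeg(f) ≥ a′·(log₂ n)^{c/(c+1)} / (log₂ log₂ n)². -/
open scoped Classical

namespace SLB

noncomputable section

/-- Probability weights on a finite type. -/
def IsPr {Ω : Type} [Fintype Ω] (w : Ω → ℝ) : Prop := (∀ ω, 0 ≤ w ω) ∧ ∑ ω, w ω = 1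

/-- Probability of an event. -/
def Pr {Ω : Type} [Fintype Ω] (w : Ω → ℝ) (E : Ω → Prop) : ℝ :=
  ∑ ω, w ω * (if E ω then 1 else 0)

/-- Product weights. -/
def prodW {κ Ω : Type} [Fintype κ] (w : κ → Ω → ℝ) (ω : κ → Ω) : ℝ := ∏ k, w k (ω k)

section basics
variable {κ Ω Ω' : Type} [Fintype κ] [DecidableEq κ] [Fintype Ω] [Fintype Ω']

lemma Pr_mono {w : Ω → ℝ} (hw : IsPr w) {E F : Ω → Prop} (h : ∀ ω, E ω → F ω) :
    Pr w E ≤ Pr w F := by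
  unfold Pr
  apply Finset.sum_le_sum
  intro ω _
  apply mul_le_mul_of_nonneg_left _ (hw.1 ω)
  by_cases hE : E ω
  · simp [hE, h ω hE]
  · simp only [hE, if_false]; split_ifs <;> norm_num

lemma Pr_nonneg {w : Ω → ℝ} (hw : IsPr w) (E : Ω → Prop) : 0 ≤ Pr w E := by
  unfold Pr
  apply Finset.sum_nonneg
  intro ω _
  apply mul_nonneg (hw.1 ω)
  split_ifs <;> norm_num

lemma Pr_or {w : Ω → ℝ} (hw : IsPr w) (E F : Ω → Prop) :
    Pr w (fun ω => E ω ∨ F ω) ≤ Pr w E + Pr w F := by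
  unfold Pr
  rw [← Finset.sum_add_distrib]
  apply Finset.sum_le_sum
  intro ω _
  rw [← mul_add]
  apply mul_le_mul_of_nonneg_left _ (hw.1 ω)
  by_cases hE : E ω <;> by_cases hF : F ω <;> simp [hE, hF]

lemma Pr_exists {τ : Type} {w : Ω → ℝ} (hw : IsPr w) (s : Finset τ) (E : τ → Ω → Prop) :
    Pr w (fun ω => ∃ k ∈ s, E k ω) ≤ ∑ k ∈ s, Pr w (E k) := by
  unfold Pr
  rw [Finset.sum_comm]
  apply Finset.sum_le_sum
  intro ω _
  rw [← Finset.mul_sum]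
  apply mul_le_mul_of_nonneg_left _ (hw.1 ω)
  split_ifs with h
  · obtain ⟨k, hk, hE⟩ := h
    have : (if E k ω then (1:ℝ) else 0) ≤ ∑ k ∈ s, if E k ω then (1:ℝ) else 0 :=
      Finset.single_le_sum (f := fun k => if E k ω then (1:ℝ) else 0)
        (fun _ _ => by split_ifs <;> norm_num) hk
    simpa [hE] using this
  · apply Finset.sum_nonneg; intros; split_ifs <;> norm_num

lemma Pr_not {w : Ω → ℝ} (hw : IsPr w) (E : Ω → Prop) :
    Pr w (fun ω => ¬ E ω) = 1 - Pr w E := by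
  rw [← hw.2]; unfold Pr
  rw [← Finset.sum_sub_distrib]
  apply Finset.sum_congr rfl
  intro ω _
  by_cases hE : E ω <;> simp [hE]

lemma sum_prodW (w : κ → Ω → ℝ) (F : κ → Ω → ℝ) :
    ∑ ω, prodW w ω * ∏ k, F k (ω k) = ∏ k, ∑ o, w k o * F k o := by
  unfold prodW
  simp_rw [← Finset.prod_mul_distrib]
  rw [Finset.prod_univ_sum]
  simp

lemma IsPr_prod {w : κ → Ω → ℝ} (hw : ∀ k, IsPr (w k)) : IsPr (prodW w) := by
  refine ⟨fun ω => Finset.prod_nonneg fun k _ => (hw k).1 _, ?_⟩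
  have := sum_prodW w (fun _ _ => 1)
  simp only [Finset.prod_const_one, mul_one] at this
  rw [this]
  exact Finset.prod_eq_one fun k _ => (hw k).2

lemma Pr_forall (w : κ → Ω → ℝ) (E : κ → Ω → Prop) :
    Pr (prodW w) (fun ω => ∀ k, E k (ω k)) = ∏ k, Pr (w k) (E k) := by
  unfold Pr
  rw [← sum_prodW]
  apply Finset.sum_congr rfl
  intro ω _
  congr 1
  by_cases h : ∀ k, E k (ω k)
  · simp [h]
  · rw [if_neg h]
    push Not at h
    obtain ⟨k, hk⟩ := h
    symm
    apply Finset.prod_eq_zero (Finset.mem_univ k)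
    simp [hk]

lemma Pr_true {w : Ω → ℝ} (hw : IsPr w) : Pr w (fun _ => True) = 1 := by
  simp [Pr, hw.2]

lemma Pr_le_one {w : Ω → ℝ} (hw : IsPr w) (E : Ω → Prop) : Pr w E ≤ 1 := by
  rw [← Pr_true hw]; exact Pr_mono hw fun _ _ => trivial

lemma Pr_marg {w : κ → Ω → ℝ} (hw : ∀ k, IsPr (w k)) (k : κ) (E : Ω → Prop) :
    Pr (prodW w) (fun ω => E (ω k)) = Pr (w k) E := by
  have h := Pr_forall w (fun j o => j = k → E o)
  have e : (fun ω : κ → Ω => ∀ j, j = k → E (ω j)) = fun ω => E (ω k) := by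
    funext ω; simp
  rw [e] at h
  rw [h, Finset.prod_eq_single k]
  · simp
  · intro b _ hb
    simp [hb, Pr_true (hw b)]
  · simp

lemma Pr_two {w : κ → Ω → ℝ} (hw : ∀ k, IsPr (w k)) (k l : κ) (hkl : k ≠ l) (E F : Ω → Prop) :
    Pr (prodW w) (fun ω => E (ω k) ∧ F (ω l)) = Pr (w k) E * Pr (w l) F := by
  have h := Pr_forall w (fun j o => (j = k → E o) ∧ (j = l → F o))
  have e : (fun ω : κ → Ω => ∀ j, (j = k → E (ω j)) ∧ (j = l → F (ω j)))
      = fun ω => E (ω k) ∧ F (ω l) := by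
    funext ω; simp [forall_and]
  rw [e] at h
  rw [h, ← Finset.mul_prod_erase _ _ (Finset.mem_univ k),
    ← Finset.mul_prod_erase _ _ (Finset.mem_erase.2 ⟨hkl.symm, Finset.mem_univ l⟩)]
  rw [Finset.prod_eq_one, mul_one]
  · simp [hkl, hkl.symm]
  · intro b hb
    simp only [Finset.mem_erase, Finset.mem_univ, and_true] at hb
    simp [hb, Pr_true (hw b)]

/-- resampling: merging two independent samples -/
lemma resample (w : κ → Ω → ℝ) (hw : IsPr (prodW w)) (D : κ → Prop) (F : (κ → Ω) → ℝ) :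
    ∑ u, prodW w u * ∑ v, prodW w v * F (fun k => if D k then u k else v k)
      = ∑ u, prodW w u * F u := by
  let mg : (κ → Ω) → (κ → Ω) → κ → Ω := fun u v k => if D k then u k else v k
  let e : (κ → Ω) × (κ → Ω) ≃ (κ → Ω) × (κ → Ω) :=
    { toFun := fun p => (mg p.1 p.2, mg p.2 p.1)
      invFun := fun p => (mg p.1 p.2, mg p.2 p.1)
      left_inv := by
        rintro ⟨u, v⟩; ext k <;> by_cases h : D k <;> simp [mg, h]
      right_inv := by
        rintro ⟨u, v⟩; ext k <;> by_cases h : D k <;> simp [mg, h] }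
  have h1 : ∑ u, prodW w u * F u = ∑ p : (κ → Ω) × (κ → Ω), prodW w p.1 * prodW w p.2 * F p.1 := by
    rw [Fintype.sum_prod_type]
    apply Finset.sum_congr rfl
    intro u _
    simp_rw [mul_assoc, mul_comm _ (F u), ← mul_assoc]
    rw [← Finset.mul_sum, hw.2, mul_one, mul_comm]
  rw [h1, ← Equiv.sum_comp e, Fintype.sum_prod_type]
  apply Finset.sum_congr rfl
  intro u _
  rw [Finset.mul_sum]
  apply Finset.sum_congr rfl
  intro v _
  have : prodW w (mg u v) * prodW w (mg v u) = prodW w u * prodW w v := by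
    unfold prodW
    rw [← Finset.prod_mul_distrib, ← Finset.prod_mul_distrib]
    apply Finset.prod_congr rfl
    intro k _
    by_cases h : D k <;> simp [mg, h, mul_comm]
  show _ = prodW w (mg u v) * prodW w (mg v u) * F (mg u v)
  rw [this, mul_assoc]

/-- pushforward of product weights -/
lemma pushforward [DecidableEq Ω'] (w : κ → Ω → ℝ) (φ : κ → Ω → Ω') (H : (κ → Ω') → ℝ) :
    ∑ ω, prodW w ω * H (fun k => φ k (ω k))
      = ∑ t, prodW (fun k o' => Pr (w k) (fun o => φ k o = o')) t * H t := by
  have h1 : ∀ t, prodW (fun k o' => Pr (w k) (fun o => φ k o = o')) t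
      = Pr (prodW w) (fun ω => ∀ k, φ k (ω k) = t k) := by
    intro t
    rw [Pr_forall w (fun k o => φ k o = t k)]; rfl
  simp_rw [h1]
  unfold Pr
  simp_rw [Finset.sum_mul]
  rw [Finset.sum_comm]
  apply Finset.sum_congr rfl
  intro ω _
  rw [Finset.sum_eq_single (fun k => φ k (ω k))]
  · simp
  · intro t _ ht
    have : ¬ ∀ k, φ k (ω k) = t k := fun h => ht (funext fun k => (h k).symm)
    simp [this]
  · simp

end basics


/-- Boolean to real. -/
def br (b : Bool) : ℝ := if b then 1 else 0

/-- Functions on the cube represented by polynomials of degree at most `d`. -/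
def LowDeg {ι : Type} (d : ℕ) (F : (ι → Bool) → ℝ) : Prop :=
  ∃ P : MvPolynomial ι ℝ, P.totalDegree ≤ d ∧ ∀ a, evalBool a P = F a

section lowdeg
variable {ι κ τ : Type}

lemma LowDeg.mono {d e : ℕ} {F : (ι → Bool) → ℝ} (h : LowDeg d F) (hde : d ≤ e) : LowDeg e F := by
  obtain ⟨P, h1, h2⟩ := h
  exact ⟨P, h1.trans hde, h2⟩

lemma LowDeg.const (d : ℕ) (c : ℝ) : LowDeg d (fun _ : ι → Bool => c) :=
  ⟨MvPolynomial.C c, by simp, by simp [evalBool]⟩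

lemma LowDeg.var (i : ι) : LowDeg 1 (fun a : ι → Bool => br (a i)) :=
  ⟨MvPolynomial.X i, by simp, by simp [evalBool, br]⟩

lemma LowDeg.mul {d e : ℕ} {F G : (ι → Bool) → ℝ} (hF : LowDeg d F) (hG : LowDeg e G) :
    LowDeg (d + e) (fun a => F a * G a) := by
  obtain ⟨P, h1, h2⟩ := hF
  obtain ⟨Q, h3, h4⟩ := hG
  refine ⟨P * Q, (MvPolynomial.totalDegree_mul _ _).trans (by omega), fun a => ?_⟩
  show _ = F a * G a
  rw [← h2, ← h4]; simp [evalBool]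

lemma LowDeg.add {d : ℕ} {F G : (ι → Bool) → ℝ} (hF : LowDeg d F) (hG : LowDeg d G) :
    LowDeg d (fun a => F a + G a) := by
  obtain ⟨P, h1, h2⟩ := hF
  obtain ⟨Q, h3, h4⟩ := hG
  refine ⟨P + Q, (MvPolynomial.totalDegree_add _ _).trans (by omega), fun a => ?_⟩
  show _ = F a + G a
  rw [← h2, ← h4]; simp [evalBool]

lemma LowDeg.sub {d : ℕ} {F G : (ι → Bool) → ℝ} (hF : LowDeg d F) (hG : LowDeg d G) :
    LowDeg d (fun a => F a - G a) := by
  obtain ⟨P, h1, h2⟩ := hF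
  obtain ⟨Q, h3, h4⟩ := hG
  refine ⟨P - Q, (MvPolynomial.totalDegree_sub _ _).trans (by omega), fun a => ?_⟩
  show _ = F a - G a
  rw [← h2, ← h4]; simp [evalBool]

lemma LowDeg.sum {d : ℕ} (s : Finset τ) (F : τ → (ι → Bool) → ℝ)
    (h : ∀ t ∈ s, LowDeg d (F t)) : LowDeg d (fun a => ∑ t ∈ s, F t a) := by
  induction s using Finset.induction_on with
  | empty => simpa using LowDeg.const d 0
  | insert t s ht ih =>
    simp_rw [Finset.sum_insert ht]
    exact (h t (Finset.mem_insert_self _ _)).add (ih fun u hu => h u (Finset.mem_insert_of_mem hu))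

lemma LowDeg.prod (s : Finset τ) (d : τ → ℕ) (F : τ → (ι → Bool) → ℝ)
    (h : ∀ t ∈ s, LowDeg (d t) (F t)) : LowDeg (∑ t ∈ s, d t) (fun a => ∏ t ∈ s, F t a) := by
  induction s using Finset.induction_on with
  | empty => simpa using LowDeg.const 0 1
  | insert t s ht ih =>
    simp_rw [Finset.prod_insert ht, Finset.sum_insert ht]
    exact (h t (Finset.mem_insert_self _ _)).mul (ih fun u hu => h u (Finset.mem_insert_of_mem hu))

lemma LowDeg.pow {d : ℕ} {F : (ι → Bool) → ℝ} (h : LowDeg d F) (k : ℕ) :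
    LowDeg (k * d) (fun a => F a ^ k) := by
  have := LowDeg.prod (Finset.range k) (fun _ => d) (fun _ => F) (fun _ _ => h)
  simpa using this

lemma LowDeg.subst {d : ℕ} {F : (ι → Bool) → ℝ} (h : LowDeg d F) (y : (κ → Bool) → ι → Bool)
    (hy : ∀ l, LowDeg 1 (fun z => br (y z l))) : LowDeg d (fun z => F (y z)) := by
  obtain ⟨P, h1, h2⟩ := h
  simp_rw [← h2, evalBool, MvPolynomial.eval_eq]
  apply LowDeg.sum
  intro m hm
  have h3 : LowDeg (∑ l ∈ m.support, m l * 1)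
      (fun z => ∏ l ∈ m.support, br (y z l) ^ (m l)) :=
    LowDeg.prod _ _ _ (fun l _ => (hy l).pow _)
  have h4 : (∑ l ∈ m.support, m l * 1) ≤ d := by
    simp only [mul_one]
    exact (MvPolynomial.le_totalDegree hm).trans h1
  have := (LowDeg.const 0 (P.coeff m)).mul (h3.mono h4)
  simpa [br] using this

lemma LowDeg.exists [Fintype ι] [DecidableEq ι] (F : (ι → Bool) → ℝ) : ∃ d, LowDeg d F := by
  refine ⟨∑ _i : ι, 1, ?_⟩
  have h : F = fun a => ∑ b : ι → Bool, F b * ∏ i, (if b i then br (a i) else 1 - br (a i)) := by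
    funext a
    rw [Finset.sum_eq_single a]
    · rw [Finset.prod_eq_one, mul_one]
      intro i _
      cases h : a i <;> simp [br]
    · intro b _ hb
      obtain ⟨i, hi⟩ := Function.ne_iff.1 hb
      rw [Finset.prod_eq_zero (Finset.mem_univ i), mul_zero]
      cases h : a i <;> cases h' : b i <;> simp_all [br]
    · simp
  rw [h]
  apply LowDeg.sum
  intro b _
  have h3 : LowDeg (∑ _i : ι, 1) (fun a => ∏ i, (if b i then br (a i) else 1 - br (a i))) := by
    apply LowDeg.prod
    intro i _
    cases b i
    · simpa using (LowDeg.const 1 1).sub (LowDeg.var i)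
    · simpa using LowDeg.var i
  simpa using (LowDeg.const 0 (F b)).mul h3

end lowdeg

/-- Flexible version of `HasProbPoly`. -/
def HasRF {ι : Type} (f : (ι → Bool) → Bool) (ε : ℝ) (d : ℕ) : Prop :=
  ∃ (Ω : Type) (_ : Fintype Ω) (w : Ω → ℝ) (F : Ω → (ι → Bool) → ℝ),
    IsPr w ∧ (∀ ω, LowDeg d (F ω)) ∧ ∀ a, Pr w (fun ω => F ω a ≠ br (f a)) ≤ ε

section rf
variable {ι κ : Type}

lemma HasRF_of (f : (ι → Bool) → Bool) (ε : ℝ) (d : ℕ) (h : HasProbPoly f ε d) : HasRF f ε d := by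
  obtain ⟨k, w, P, h1, h2, h3, h4⟩ := h
  refine ⟨Fin k, inferInstance, w, fun i a => evalBool a (P i), ⟨h1, h2⟩,
    fun i => ⟨P i, h3 i, fun _ => rfl⟩, fun a => ?_⟩
  refine le_trans (le_of_eq ?_) (h4 a)
  unfold Pr br
  rw [Finset.sum_filter]
  apply Finset.sum_congr rfl
  intro i _
  split_ifs <;> simp

lemma HasRF.to (f : (ι → Bool) → Bool) (ε : ℝ) (d : ℕ) (h : HasRF f ε d) : HasProbPoly f ε d := by
  obtain ⟨Ω, _, w, F, ⟨h1, h2⟩, h3, h4⟩ := h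
  choose P hP1 hP2 using h3
  let e := (Fintype.equivFin Ω).symm
  refine ⟨Fintype.card Ω, fun i => w (e i), fun i => P (e i), fun i => h1 _, ?_,
    fun i => hP1 _, fun a => ?_⟩
  · rw [← h2]; exact Equiv.sum_comp e w
  · refine le_trans (le_of_eq ?_) (h4 a)
    unfold Pr br
    rw [Finset.sum_filter, ← Equiv.sum_comp e]
    apply Finset.sum_congr rfl
    intro i _
    rw [hP2]
    split_ifs <;> simp

lemma HasRF.mono {f : (ι → Bool) → Bool} {ε ε' : ℝ} {d d' : ℕ} (h : HasRF f ε d) (hε : ε ≤ ε')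
    (hd : d ≤ d') : HasRF f ε' d' := by
  obtain ⟨Ω, i, w, F, h1, h3, h4⟩ := h
  exact ⟨Ω, i, w, F, h1, fun ω => (h3 ω).mono hd, fun a => (h4 a).trans hε⟩

lemma HasRF.pdeg [Fintype ι] [DecidableEq ι] (f : (ι → Bool) → Bool) :
    HasRF f (1/3) (pdeg (1/3) f) := by
  apply HasRF_of
  have : {d | HasProbPoly f (1/3) d}.Nonempty := by
    obtain ⟨d, hd⟩ := LowDeg.exists (fun a => br (f a))
    refine ⟨d, HasRF.to _ _ _ ⟨Unit, inferInstance, fun _ => 1, fun _ a => br (f a), ⟨by simp, by simp⟩,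
      fun _ => hd, fun a => ?_⟩⟩
    simp [Pr]
  exact Nat.sInf_mem this

lemma HasRF.pdeg_le {f : (ι → Bool) → Bool} {d : ℕ} (h : HasRF f (1/3) d) :
    _root_.pdeg (1/3) f ≤ d := Nat.sInf_le (h.to)

lemma HasRF.subst {f : (ι → Bool) → Bool} {ε : ℝ} {d : ℕ} (h : HasRF f ε d)
    (y : (κ → Bool) → ι → Bool)
    (hy : ∀ l, LowDeg 1 (fun z => br (y z l))) : HasRF (fun z => f (y z)) ε d := by
  obtain ⟨Ω, i, w, F, h1, h3, h4⟩ := h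
  exact ⟨Ω, i, w, fun ω z => F ω (y z), h1, fun ω => (h3 ω).subst y hy, fun a => h4 _⟩

lemma HasRF.not {f : (ι → Bool) → Bool} {ε : ℝ} {d : ℕ} (h : HasRF f ε d) :
    HasRF (fun z => !(f z)) ε d := by
  obtain ⟨Ω, i, w, F, h1, h3, h4⟩ := h
  refine ⟨Ω, i, w, fun ω z => 1 - F ω z, h1, fun ω => (LowDeg.const d 1).sub (h3 ω), fun a => ?_⟩
  refine le_trans (Pr_mono (F := fun ω => F ω a ≠ br (f a)) h1 fun ω hω he => hω ?_) (h4 a)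
  show 1 - F ω a = br (!(f a))
  rw [he]; cases f a <;> simp [br]

/-- the majority polynomial -/
def majP (r : ℕ) (v : Fin (2*r) → ℝ) : ℝ :=
  ∑ a : Fin (2*r) → Bool, (if r ≤ (Finset.univ.filter (fun j => a j = true)).card then 1 else 0) *
    ∏ j, (if a j then v j else 1 - v j)

lemma majP_eq (r : ℕ) (v : Fin (2*r) → ℝ) (b : Bool)
    (h : (Finset.univ.filter (fun j => v j ≠ br b)).card < r) : majP r v = br b := by
  have hone : ∑ a : Fin (2*r) → Bool, ∏ j, (if a j then v j else 1 - v j) = 1 := by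
    have := sum_prodW (fun (j : Fin (2*r)) (c : Bool) => if c then v j else 1 - v j) (fun _ _ => 1)
    simpa [prodW] using this
  cases b
  · simp only [br, Bool.false_eq_true, if_false] at h ⊢
    unfold majP
    apply Finset.sum_eq_zero
    intro a _
    split_ifs with hr
    · have : ¬ (Finset.univ.filter (fun j => a j = true)) ⊆
          (Finset.univ.filter (fun j => v j ≠ 0)) := fun hs => by
        have := Finset.card_le_card hs; omega
      obtain ⟨j, hj1, hj2⟩ := Finset.not_subset.1 this
      simp only [Finset.mem_filter, Finset.mem_univ, true_and, not_not] at hj1 hj2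
      rw [Finset.prod_eq_zero (Finset.mem_univ j), mul_zero]
      simp [hj1, hj2]
    · simp
  · simp only [br, if_true] at h ⊢
    rw [← hone]
    unfold majP
    apply Finset.sum_congr rfl
    intro a _
    split_ifs with hr
    · simp
    · have hc : (Finset.univ.filter (fun j => a j = true)).card +
          (Finset.univ.filter (fun j => ¬ a j = true)).card = 2 * r := by
        rw [Finset.card_filter_add_card_filter_not]; simp
      have : ¬ (Finset.univ.filter (fun j => ¬ a j = true)) ⊆
          (Finset.univ.filter (fun j => v j ≠ 1)) := fun hs => by
        have := Finset.card_le_card hs; omega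
      obtain ⟨j, hj1, hj2⟩ := Finset.not_subset.1 this
      simp only [Finset.mem_filter, Finset.mem_univ, true_and, not_not] at hj1 hj2
      rw [Finset.prod_eq_zero (Finset.mem_univ j), mul_zero]
      simp [hj1, hj2]

lemma majP_low (r d : ℕ) (F : Fin (2*r) → (ι → Bool) → ℝ) (h : ∀ j, LowDeg d (F j)) :
    LowDeg (2*r*d) (fun a => majP r (fun j => F j a)) := by
  unfold majP
  apply LowDeg.sum
  intro b _
  have h3 : LowDeg (∑ _j : Fin (2*r), d) (fun a => ∏ j, (if b j then F j a else 1 - F j a)) := by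
    apply LowDeg.prod
    intro j _
    cases b j
    · simpa using (LowDeg.const d 1).sub (h j)
    · simpa using h j
  have := (LowDeg.const 0
    (if r ≤ (Finset.univ.filter (fun j => b j = true)).card then (1:ℝ) else 0)).mul h3
  simpa using this

lemma HasRF.amp {f : (ι → Bool) → Bool} {d : ℕ} (h : HasRF f (1/3) d) (r : ℕ) :
    HasRF f ((8/9)^r) (2*r*d) := by
  obtain ⟨Ω, i, w, F, h1, h3, h4⟩ := h
  refine ⟨Fin (2*r) → Ω, inferInstance, prodW (fun _ => w),
    fun ω a => majP r (fun j => F (ω j) a), IsPr_prod (fun _ => h1),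
    fun ω => majP_low r d _ (fun j => h3 _), fun a => ?_⟩
  have hP := IsPr_prod (κ := Fin (2*r)) (fun _ => h1)
  refine (Pr_mono (F := fun ω => r ≤ (Finset.univ.filter (fun j => F (ω j) a ≠ br (f a))).card)
    hP fun ω hω => ?_).trans ?_
  · by_contra hc
    exact hω (majP_eq r _ _ (not_le.1 hc))
  · have key := sum_prodW (κ := Fin (2*r)) (fun _ => w)
      (fun _ o => if F o a ≠ br (f a) then (2:ℝ) else 1)
    have hE : ∑ o, w o * (if F o a ≠ br (f a) then (2:ℝ) else 1) ≤ 4/3 := by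
      have : ∑ o, w o * (if F o a ≠ br (f a) then (2:ℝ) else 1)
          = ∑ o, w o + Pr w (fun ω => F ω a ≠ br (f a)) := by
        unfold Pr; rw [← Finset.sum_add_distrib]
        apply Finset.sum_congr rfl; intro o _; split_ifs <;> ring
      rw [this, h1.2]; linarith [h4 a]
    have hE0 : 0 ≤ ∑ o, w o * (if F o a ≠ br (f a) then (2:ℝ) else 1) :=
      Finset.sum_nonneg fun o _ => mul_nonneg (h1.1 o) (by split_ifs <;> norm_num)
    have h5 : Pr (prodW fun _ => w)
        (fun ω : Fin (2*r) → Ω =>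
          r ≤ (Finset.univ.filter (fun j => F (ω j) a ≠ br (f a))).card) * 2^r
        ≤ (4/3)^(2*r) := by
      calc _ ≤ ∑ ω : Fin (2*r) → Ω, prodW (fun _ => w) ω *
              ∏ k, (fun _ o => if F o a ≠ br (f a) then (2:ℝ) else 1) k (ω k) := by
            unfold Pr
            rw [Finset.sum_mul]
            apply Finset.sum_le_sum
            intro ω _
            rw [mul_assoc]
            apply mul_le_mul_of_nonneg_left _ (hP.1 ω)
            have hp : ∏ k, (if F (ω k) a ≠ br (f a) then (2:ℝ) else 1)
                = 2 ^ (Finset.univ.filter (fun j => F (ω j) a ≠ br (f a))).card := by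
              rw [Finset.prod_ite]; simp
            simp only [hp]
            split_ifs with hr
            · rw [one_mul]; exact pow_le_pow_right₀ (by norm_num) hr
            · rw [zero_mul]; positivity
        _ ≤ _ := by
            rw [key]
            rw [Finset.prod_const, Finset.card_univ, Fintype.card_fin]
            exact pow_le_pow_left₀ hE0 hE _
    have h6 : ((8:ℝ)/9)^r * 2^r = (4/3)^(2*r) := by
      rw [← mul_pow, pow_mul]; norm_num
    rw [← h6] at h5
    exact le_of_mul_le_mul_right h5 (by positivity)

end rf


section exactly
variable {κ Ω : Type} [Fintype κ] [DecidableEq κ] [Fintype Ω]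

lemma Pr_exactly_one {w : Ω → ℝ} (hw : IsPr w) (X : Finset κ) (E : Ω → Prop) :
    X.card * Pr w E - (X.card * Pr w E)^2 ≤
      Pr (prodW (fun _ : κ => w)) (fun ω => (X.filter (fun k => E (ω k))).card = 1) := by
  have hP : IsPr (prodW (fun _ : κ => w)) := IsPr_prod (fun _ => hw)
  set W := prodW (fun _ : κ => w) with hW
  set ρ := Pr w E with hρ
  have h1 : ∀ k, Pr W (fun ω => E (ω k)) = ρ := fun k => Pr_marg (fun _ => hw) k E
  have h2 : ∀ k l, k ≠ l → Pr W (fun ω => E (ω k) ∧ E (ω l)) = ρ * ρ :=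
    fun k l hkl => Pr_two (fun _ => hw) k l hkl E E
  have hρ0 : 0 ≤ ρ := Pr_nonneg hw E
  have h3 : ∑ k ∈ X, ∑ l ∈ X, Pr W (fun ω => E (ω k) ∧ E (ω l))
      ≤ X.card * ρ + (X.card * ρ)^2 := by
    have : ∀ k ∈ X, ∑ l ∈ X, Pr W (fun ω => E (ω k) ∧ E (ω l)) ≤ ρ + X.card * (ρ * ρ) := by
      intro k hk
      rw [← Finset.add_sum_erase _ _ hk]
      have ha : Pr W (fun ω => E (ω k) ∧ E (ω k)) = ρ := by simp [h1]
      have hb : ∑ l ∈ X.erase k, Pr W (fun ω => E (ω k) ∧ E (ω l)) = (X.erase k).card * (ρ * ρ) := by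
        rw [Finset.sum_congr rfl (fun l hl => h2 k l (Finset.ne_of_mem_erase hl).symm)]
        simp
      rw [ha, hb]
      have : ((X.erase k).card : ℝ) ≤ X.card := by
        exact_mod_cast Finset.card_le_card (Finset.erase_subset _ _)
      have := mul_le_mul_of_nonneg_right this (mul_nonneg hρ0 hρ0)
      linarith
    refine (Finset.sum_le_sum this).trans (le_of_eq ?_)
    simp; ring
  have h4 : ∑ k ∈ X, Pr W (fun ω => E (ω k)) = X.card * ρ := by
    simp [h1]
  have h5 : 2 * ∑ k ∈ X, Pr W (fun ω => E (ω k))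
      - ∑ k ∈ X, ∑ l ∈ X, Pr W (fun ω => E (ω k) ∧ E (ω l))
      ≤ Pr W (fun ω => (X.filter (fun k => E (ω k))).card = 1) := by
    have e1 : ∑ k ∈ X, ∑ l ∈ X, ∑ ω, W ω * (if E (ω k) ∧ E (ω l) then (1:ℝ) else 0)
        = ∑ ω, W ω * ((X.filter (fun k => E (ω k))).card : ℝ)^2 := by
      have : ∀ k ∈ X, ∑ l ∈ X, ∑ ω, W ω * (if E (ω k) ∧ E (ω l) then (1:ℝ) else 0)
        = ∑ ω, ∑ l ∈ X, W ω * (if E (ω k) ∧ E (ω l) then (1:ℝ) else 0) := fun k _ => Finset.sum_comm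
      rw [Finset.sum_congr rfl this, Finset.sum_comm]
      apply Finset.sum_congr rfl
      intro ω _
      simp_rw [← Finset.mul_sum]
      congr 1
      have hc : ((X.filter (fun k => E (ω k))).card : ℝ) = ∑ k ∈ X, if E (ω k) then (1:ℝ) else 0 := by
        simp
      rw [hc, sq, Finset.sum_mul_sum]
      apply Finset.sum_congr rfl
      intro k _
      apply Finset.sum_congr rfl
      intro l _
      by_cases ha : E (ω k) <;> by_cases hb : E (ω l) <;> simp [ha, hb]
    have e2 : ∑ k ∈ X, ∑ ω, W ω * (if E (ω k) then (1:ℝ) else 0)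
        = ∑ ω, W ω * ((X.filter (fun k => E (ω k))).card : ℝ) := by
      rw [Finset.sum_comm]
      apply Finset.sum_congr rfl
      intro ω _
      rw [← Finset.mul_sum]
      simp
    have e1' : ∑ k ∈ X, ∑ l ∈ X, Pr W (fun ω => E (ω k) ∧ E (ω l))
        = ∑ ω, W ω * ((X.filter (fun k => E (ω k))).card : ℝ)^2 := by
      rw [← e1]; unfold Pr; congr!
    have e2' : ∑ k ∈ X, Pr W (fun ω => E (ω k))
        = ∑ ω, W ω * ((X.filter (fun k => E (ω k))).card : ℝ) := by
      rw [← e2]; unfold Pr; congr!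
    rw [e1', e2', Finset.mul_sum, ← Finset.sum_sub_distrib]
    unfold Pr
    apply Finset.sum_le_sum
    intro ω _
    have : 2 * (W ω * ((X.filter (fun k => E (ω k))).card : ℝ)) -
        W ω * ((X.filter (fun k => E (ω k))).card : ℝ)^2 =
        W ω * (2 * ((X.filter (fun k => E (ω k))).card : ℝ) -
          ((X.filter (fun k => E (ω k))).card : ℝ)^2) := by ring
    rw [this]
    apply mul_le_mul_of_nonneg_left _ (hP.1 ω)
    beta_reduce
    generalize (X.filter (fun k => E (ω k))).card = y
    rcases y with _ | _ | y
    · simp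
    · simp; norm_num
    · rw [if_neg (by omega)]
      push_cast
      nlinarith [(Nat.cast_nonneg y : (0:ℝ) ≤ y)]
  linarith

/-- dyadic version -/
lemma Pr_exactly_one' {w : Ω → ℝ} (hw : IsPr w) (X : Finset κ) (E : Ω → Prop)
    (h1 : 1/4 ≤ X.card * Pr w E) (h2 : X.card * Pr w E ≤ 1/2 ∨ X.card = 1) :
    1/8 ≤ Pr (prodW (fun _ : κ => w)) (fun ω => (X.filter (fun k => E (ω k))).card = 1) := by
  rcases h2 with h2 | h2
  · refine le_trans ?_ (Pr_exactly_one hw X E)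
    nlinarith
  · obtain ⟨k, rfl⟩ := Finset.card_eq_one.1 h2
    have := Pr_marg (fun _ : κ => hw) k E
    have e : (fun ω : κ → Ω => (Finset.filter (fun k => E (ω k)) {k}).card = 1)
        = fun ω => E (ω k) := by
      funext ω
      by_cases h : E (ω k) <;> simp [Finset.filter_singleton, h]
    rw [e, this]
    simp at h1
    linarith

end exactly

/-- Bernoulli weights. -/
def ber (p : ℝ) (b : Bool) : ℝ := if b then p else 1 - p

lemma ber_pr {p : ℝ} (h0 : 0 ≤ p) (h1 : p ≤ 1) : IsPr (ber p) := by
  refine ⟨fun b => ?_, by simp [ber]⟩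
  cases b <;> simp [ber, h0, h1]

/-- random scale, random set -/
def w1 (K m : ℕ) (ω : Fin K × (Fin m → Bool)) : ℝ :=
  (1 / K) * prodW (fun _ : Fin m => ber ((1/2)^(ω.1.val+1))) ω.2

lemma w1_pr (K m : ℕ) (hK : 0 < K) : IsPr (w1 K m) := by
  have hb : ∀ j : ℕ, IsPr (ber (((1:ℝ)/2)^(j+1))) := fun j =>
    ber_pr (by positivity) (pow_le_one₀ (by norm_num) (by norm_num))
  refine ⟨fun ω => mul_nonneg (by positivity) ((IsPr_prod (fun _ => hb _)).1 _), ?_⟩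
  rw [Fintype.sum_prod_type]
  unfold w1
  simp_rw [← Finset.mul_sum]
  rw [Finset.sum_congr rfl (fun (j : Fin K) _ => (IsPr_prod (κ := Fin m) (fun _ => hb j.val)).2)]
  have : (K:ℝ) ≠ 0 := by positivity
  simp [this]

/-- g looks like OR on weight at most one. -/
def ORlike {m : ℕ} (g : (Fin m → Bool) → Bool) : Prop :=
  g (fun _ => false) = false ∧ ∀ i, g (fun l => decide (l = i)) = true

lemma w1_iso {K m : ℕ} {g : (Fin m → Bool) → Bool} (hg : ORlike g) (hK : Nat.log 2 m + 2 ≤ K)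
    (x : Fin m → Bool) (hx : ∃ i, x i = true) :
    1 / (8 * K) ≤ Pr (w1 K m) (fun ω => g (fun l => x l && ω.2 l) = true) := by
  have hb : ∀ j : ℕ, IsPr (ber (((1:ℝ)/2)^(j+1))) := fun j =>
    ber_pr (by positivity) (pow_le_one₀ (by norm_num) (by norm_num))
  set X := Finset.univ.filter (fun l => x l = true) with hX
  have hk0 : X.card ≠ 0 := by
    obtain ⟨i, hi⟩ := hx
    exact Finset.card_ne_zero_of_mem (a := i) (by simp [hX, hi])
  have hkm : X.card ≤ m := (Finset.card_le_univ X).trans (by simp)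
  have hl : Nat.log 2 X.card ≤ Nat.log 2 m := Nat.log_mono_right hkm
  set q := Nat.log 2 X.card with hq
  have hq1 : (2:ℝ)^q ≤ X.card := by exact_mod_cast Nat.pow_log_le_self 2 hk0
  have hq2 : (X.card : ℝ) < 2^(q+1) := by
    exact_mod_cast Nat.lt_pow_succ_log_self (by norm_num : 1 < 2) X.card
  let j : Fin K := ⟨q+1, by omega⟩
  have hρ : Pr (ber (((1:ℝ)/2)^(j.val+1))) (fun b => b = true) = (1/2)^(q+2) := by
    simp [Pr, ber, j]
  have h2q : (0:ℝ) < 2^q := by positivity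
  have hpw : ((1:ℝ)/2)^(q+2) = 1 / (4 * 2^q) := by
    rw [div_pow, one_pow, pow_add]; norm_num; ring
  have key := Pr_exactly_one' (κ := Fin m) (hb j.val) X (fun b => b = true)
    (by
      rw [hρ, hpw, mul_one_div, le_div_iff₀ (by positivity)]
      linarith)
    (by
      left
      rw [hρ, hpw, mul_one_div, div_le_iff₀ (by positivity)]
      rw [pow_succ] at hq2
      linarith)
  have hKp : (0:ℝ) < K := by
    have : 0 < K := by omega
    exact_mod_cast this
  have h1 : (1 / K : ℝ) * Pr (prodW (fun _ : Fin m => ber (((1:ℝ)/2)^(j.val+1))))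
      (fun R => (X.filter (fun k => R k = true)).card = 1) ≤
      Pr (w1 K m) (fun ω => g (fun l => x l && ω.2 l) = true) := by
    have hw := (w1_pr K m (by omega)).1
    unfold Pr
    rw [Fintype.sum_prod_type]
    refine le_trans ?_ (Finset.single_le_sum (fun i _ => Finset.sum_nonneg fun y _ => mul_nonneg (hw _) (by split_ifs <;> norm_num))
      (Finset.mem_univ j))
    rw [Finset.mul_sum]
    apply Finset.sum_le_sum
    intro R _
    rw [← mul_assoc]
    refine mul_le_mul_of_nonneg_left ?_ (hw (j, R))
    split_ifs with ha hb' hb'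
    · exact le_refl _
    · exfalso
      obtain ⟨i, hi⟩ := Finset.card_eq_one.1 ha
      apply hb'
      rw [← hg.2 i]
      congr 1
      funext l
      have : l ∈ X.filter (fun k => R k = true) ↔ l = i := by rw [hi]; simp
      simp only [hX, Finset.mem_filter, Finset.mem_univ, true_and] at this
      rw [Bool.eq_iff_iff]
      simp [this]
    · norm_num
    · norm_num
  refine le_trans ?_ h1
  have : (1:ℝ) / (8 * K) = 1 / K * (1/8) := by field_simp
  rw [this]
  exact mul_le_mul_of_nonneg_left (key.trans (le_of_eq (by congr!))) (by positivity)


/-- product of two weights -/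
def pw {Ω Ω' : Type} (w : Ω → ℝ) (w' : Ω' → ℝ) (ω : Ω × Ω') : ℝ := w ω.1 * w' ω.2

section pairs
variable {Ω Ω' : Type} [Fintype Ω] [Fintype Ω']

lemma pw_pr {w : Ω → ℝ} {w' : Ω' → ℝ} (hw : IsPr w) (hw' : IsPr w') : IsPr (pw w w') := by
  refine ⟨fun ω => mul_nonneg (hw.1 _) (hw'.1 _), ?_⟩
  rw [Fintype.sum_prod_type]
  unfold pw
  simp_rw [← Finset.mul_sum, hw'.2, mul_one, hw.2]

lemma Pr_pw (w : Ω → ℝ) (w' : Ω' → ℝ) (E : Ω × Ω' → Prop) :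
    Pr (pw w w') E = ∑ o, w o * Pr w' (fun o' => E (o, o')) := by
  unfold Pr pw
  rw [Fintype.sum_prod_type]
  apply Finset.sum_congr rfl
  intro o _
  rw [Finset.mul_sum]
  apply Finset.sum_congr rfl
  intro o' _
  rw [mul_assoc]

lemma Pr_pw_fst (w : Ω → ℝ) {w' : Ω' → ℝ} (hw' : IsPr w') (E : Ω → Prop) :
    Pr (pw w w') (fun ω => E ω.1) = Pr w E := by
  rw [Pr_pw]
  unfold Pr
  apply Finset.sum_congr rfl
  intro o _
  by_cases h : E o <;> simp [h, hw'.2]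

lemma Pr_pw_le {w : Ω → ℝ} (hw : IsPr w) (w' : Ω' → ℝ) (E : Ω × Ω' → Prop) (δ : ℝ)
    (h : ∀ o, Pr w' (fun o' => E (o, o')) ≤ δ) : Pr (pw w w') E ≤ δ := by
  rw [Pr_pw]
  refine (Finset.sum_le_sum fun o _ => mul_le_mul_of_nonneg_left (h o) (hw.1 o)).trans ?_
  rw [← Finset.sum_mul, hw.2, one_mul]

end pairs

/-- choose the dyadic level -/
lemma level_exists (ρ : ℝ) (Q : ℕ) (h : 1/4 ≤ 2^Q * ρ) :
    ∃ q ≤ Q, 1/4 ≤ 2^q * ρ ∧ (2^q * ρ ≤ 1/2 ∨ q = 0) := by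
  have hex : ∃ q, 1/4 ≤ 2^q * ρ := ⟨Q, h⟩
  refine ⟨Nat.find hex, Nat.find_min' hex h, Nat.find_spec hex, ?_⟩
  rcases hq : Nat.find hex with _ | q
  · right; rfl
  · left
    have := Nat.find_min hex (m := q) (by omega)
    rw [pow_succ]
    push Not at this
    linarith

lemma iso_amp {Ω ι : Type} [Fintype Ω] {w : Ω → ℝ} (hw : IsPr w) (D Q : ℕ) (δ : ℝ)
    (V : Ω → (ι → Bool) → ℝ) (hV : ∀ ω, LowDeg D (V ω)) (b : Ω → (ι → Bool) → Bool)
    (hb : ∀ x, Pr w (fun ω => V ω x ≠ br (b ω x)) ≤ δ)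
    (h0 : ∀ ω, b ω (fun _ => false) = false)
    (h1 : ∀ x, (∃ i, x i = true) → 1/4 ≤ 2^Q * Pr w (fun ω => b ω x = true))
    (hδ : ((Q:ℝ)+1) * 2^Q * δ ≤ 1/40) :
    ∃ (Ω3 : Type) (_ : Fintype Ω3) (w3 : Ω3 → ℝ) (U : Ω3 → (ι → Bool) → ℝ), IsPr w3 ∧
      (∀ ω, LowDeg ((Q+1)*D) (U ω)) ∧ Pr w3 (fun ω => U ω (fun _ => false) ≠ 0) ≤ 1/40 ∧
      ∀ x, (∃ i, x i = true) → Pr w3 (fun ω => U ω x ≠ 1) ≤ 9/10 := by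
  let I := Fin (Q+1) × Fin (2^Q)
  let S : Fin (Q+1) → Finset (Fin (2^Q)) := fun q => Finset.univ.filter (fun i => i.val < 2^q.val)
  have hScard : ∀ q, (S q).card = 2^q.val := by
    intro q
    have : 2^q.val ≤ 2^Q := Nat.pow_le_pow_right (by norm_num) (by omega)
    have e : S q = Finset.univ.map (Fin.castLEEmb this) := by
      ext i
      simp only [S, Finset.mem_filter, Finset.mem_univ, true_and, Finset.mem_map]
      constructor
      · intro h; exact ⟨⟨i.val, h⟩, by ext; simp⟩
      · rintro ⟨j, rfl⟩; simp
    rw [e]; simp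
  let U : (I → Ω) → (ι → Bool) → ℝ := fun ω x =>
    1 - ∏ q : Fin (Q+1), (1 - ∑ i ∈ S q, V (ω (q, i)) x)
  have hP : IsPr (prodW (fun _ : I => w)) := IsPr_prod (fun _ => hw)
  have hbad : ∀ x, Pr (prodW (fun _ : I => w)) (fun ω => ∃ k ∈ (Finset.univ : Finset I),
      V (ω k) x ≠ br (b (ω k) x)) ≤ 1/40 := by
    intro x
    refine (Pr_exists hP _ _).trans ?_
    have : ∀ k ∈ (Finset.univ : Finset I), Pr (prodW (fun _ : I => w)) (fun ω => V (ω k) x ≠ br (b (ω k) x)) ≤ δ := by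
      intro k _
      rw [Pr_marg (fun _ : I => hw) k (fun o => V o x ≠ br (b o x))]
      exact hb x
    refine (Finset.sum_le_sum this).trans ?_
    simp [I]
    linarith
  refine ⟨I → Ω, inferInstance, prodW (fun _ => w), U, hP, ?_, ?_, ?_⟩
  · intro ω
    refine (LowDeg.const _ 1).sub ?_
    have := LowDeg.prod Finset.univ (fun _ => D)
      (fun (q : Fin (Q+1)) (x : ι → Bool) => 1 - ∑ i ∈ S q, V (ω (q, i)) x)
      (fun q _ => (LowDeg.const D 1).sub (LowDeg.sum _ _ fun i _ => hV _))
    simpa using this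
  · refine (Pr_mono hP ?_).trans (hbad (fun _ => false))
    intro ω hω
    by_contra hcon
    push Not at hcon
    apply hω
    simp only [U]
    rw [Finset.prod_eq_one, sub_self]
    intro q _
    rw [Finset.sum_eq_zero, sub_zero]
    intro i _
    rw [hcon _ (Finset.mem_univ _), h0]; simp [br]
  · intro x hx
    obtain ⟨q, hqQ, hq1, hq2⟩ := level_exists _ Q (h1 x hx)
    let q' : Fin (Q+1) := ⟨q, by omega⟩
    let X : Finset I := (S q').map ⟨fun i => (q', i), fun i j h => (Prod.mk.inj h).2⟩
    have hX : X.card = 2^q := by rw [Finset.card_map, hScard]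
    have key := Pr_exactly_one' hw X (fun o => b o x = true)
      (by rw [hX]; push_cast; exact hq1)
      (by
        rw [hX]; push_cast
        rcases hq2 with h | h
        · left; exact h
        · right; simp [h])
    have hn := Pr_not hP (fun ω => (X.filter (fun k => b (ω k) x = true)).card = 1)
    have hle : Pr (prodW (fun _ : I => w)) (fun ω => U ω x ≠ 1) ≤
        Pr (prodW (fun _ : I => w)) (fun ω => ¬ (X.filter (fun k => b (ω k) x = true)).card = 1) +
        Pr (prodW (fun _ : I => w)) (fun ω => ∃ k ∈ (Finset.univ : Finset I),
          V (ω k) x ≠ br (b (ω k) x)) := by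
      refine le_trans (Pr_mono hP ?_) (Pr_or hP _ _)
      intro ω hω
      by_contra hcon
      push Not at hcon
      obtain ⟨hc1, hc2⟩ := hcon
      apply hω
      simp only [U]
      rw [Finset.prod_eq_zero (Finset.mem_univ q'), sub_zero]
      have : ∑ i ∈ S q', V (ω (q', i)) x = ((X.filter (fun k => b (ω k) x = true)).card : ℝ) := by
        rw [Finset.card_filter]
        push_cast
        rw [Finset.sum_map]
        apply Finset.sum_congr rfl
        intro i _
        rw [hc2 _ (Finset.mem_univ _)]
        rfl
      rw [this, hc1]; simp
    have hk : 1/8 ≤ Pr (prodW (fun _ : I => w)) (fun ω => (X.filter (fun k => b (ω k) x = true)).card = 1) :=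
      key.trans (le_of_eq (by congr!))
    have := hbad x
    linarith

lemma reps {Ω ι : Type} [Fintype Ω] {w : Ω → ℝ} (hw : IsPr w) (D : ℕ)
    (U : Ω → (ι → Bool) → ℝ) (hU : ∀ ω, LowDeg D (U ω)) (f : (ι → Bool) → Bool)
    (h0 : ∀ x, f x = false → Pr w (fun ω => U ω x ≠ 0) ≤ 1/40)
    (h1 : ∀ x, f x = true → Pr w (fun ω => U ω x ≠ 1) ≤ 9/10) : HasRF f (1/3) (11*D) := by
  have hP : IsPr (prodW (fun _ : Fin 11 => w)) := IsPr_prod (fun _ => hw)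
  refine ⟨Fin 11 → Ω, inferInstance, prodW (fun _ => w),
    fun ω x => 1 - ∏ j, (1 - U (ω j) x), hP, ?_, ?_⟩
  · intro ω
    refine (LowDeg.const _ 1).sub ?_
    have := LowDeg.prod Finset.univ (fun _ => D)
      (fun (q : Fin 11) (x : ι → Bool) => 1 - U (ω q) x)
      (fun q _ => (LowDeg.const D 1).sub (hU _))
    simpa using this
  · intro x
    cases hf : f x
    · have : Pr (prodW (fun _ : Fin 11 => w)) (fun ω => ∃ k ∈ (Finset.univ : Finset (Fin 11)),
          U (ω k) x ≠ 0) ≤ 1/3 := by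
        refine (Pr_exists hP _ _).trans ?_
        have : ∀ k ∈ (Finset.univ : Finset (Fin 11)), Pr (prodW (fun _ : Fin 11 => w)) (fun ω => U (ω k) x ≠ 0) ≤ 1/40 := by
          intro k _
          rw [Pr_marg (fun _ : Fin 11 => hw) k (fun o => U o x ≠ 0)]
          exact h0 x hf
        refine (Finset.sum_le_sum this).trans ?_
        simp; norm_num
      refine (Pr_mono hP ?_).trans this
      intro ω hω
      by_contra hcon
      push Not at hcon
      apply hω
      beta_reduce
      rw [Finset.prod_eq_one]
      · simp [br]
      · intro j _; rw [hcon j (Finset.mem_univ _)]; simp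
    · have : Pr (prodW (fun _ : Fin 11 => w)) (fun ω => ∀ k, U (ω k) x ≠ 1) ≤ 1/3 := by
        rw [Pr_forall (fun _ : Fin 11 => w) (fun _ o => U o x ≠ 1)]
        rw [Finset.prod_const]
        refine (pow_le_pow_left₀ (Pr_nonneg hw _) (h1 x hf) _).trans ?_
        simp; norm_num
      refine (Pr_mono hP ?_).trans this
      intro ω hω k hk
      apply hω
      beta_reduce
      rw [Finset.prod_eq_zero (Finset.mem_univ k)]
      · simp [br]
      · rw [hk]; simp

lemma or_of_ORlike {m : ℕ} {g : (Fin m → Bool) → Bool} (hg : ORlike g) {d : ℕ}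
    (h : HasRF g (1/3) d) (K Q : ℕ) (hK : Nat.log 2 m + 2 ≤ K) (hQ : 2 * K ≤ 2^Q) :
    HasRF (ORf m) (1/3) (11*((Q+1)*(2*(12*Q+32)*d))) := by
  obtain ⟨Ω, _, w, F, hw, hF, hFe⟩ := h.amp (12*Q+32)
  have hK0 : 0 < K := by omega
  have hw1 := w1_pr K m hK0
  have hKr : (0:ℝ) < K := by exact_mod_cast hK0
  obtain ⟨Ω3, _, w3, U, hw3, hU, hU0, hU1⟩ := iso_amp (ι := Fin m) (pw_pr hw1 hw) (2*(12*Q+32)*d) Q ((8/9)^(12*Q+32))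
    (fun ω x => F ω.2 (fun l => x l && ω.1.2 l))
    (fun ω => (hF ω.2).subst _ (fun l => by
      by_cases hl : ω.1.2 l = true
      · simpa [hl] using LowDeg.var l
      · simpa [hl] using LowDeg.const 1 (br false)))
    (fun ω x => g (fun l => x l && ω.1.2 l))
    (fun x => Pr_pw_le hw1 w _ _ fun o => hFe (fun l => x l && o.2 l))
    (fun ω => by simpa using hg.1)
    (fun x hx => by
      rw [Pr_pw_fst (w1 K m) hw (fun o => g (fun l => x l && o.2 l) = true)]
      have h1 := w1_iso hg hK x hx
      have h2 : (2 * K : ℝ) ≤ 2^Q := by exact_mod_cast hQ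
      calc (1/4 : ℝ) = (2*K) * (1 / (8*K)) := by field_simp; norm_num
        _ ≤ 2^Q * (1/(8*K)) := mul_le_mul_of_nonneg_right h2 (by positivity)
        _ ≤ _ := mul_le_mul_of_nonneg_left h1 (by positivity))
    (by
      have h1 : ((Q:ℝ)+1) ≤ 2^Q := by exact_mod_cast Nat.lt_two_pow_self (n := Q)
      have h2 : ((8:ℝ)/9)^(12*Q) ≤ (1/4)^Q := by
        rw [pow_mul]; exact pow_le_pow_left₀ (by positivity) (by norm_num) _
      have h3 : ((8:ℝ)/9)^32 ≤ 1/40 := by norm_num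
      rw [pow_add]
      calc ((Q:ℝ)+1) * 2^Q * ((8/9)^(12*Q) * (8/9)^32) ≤ 2^Q * 2^Q * ((1/4)^Q * (1/40)) := by
            gcongr
        _ = 1/40 := by
            have : (2:ℝ)^Q * 2^Q * (1/4)^Q = 1 := by
              rw [← mul_pow, ← mul_pow]; norm_num
            rw [← mul_assoc, this, one_mul])
  refine reps hw3 _ U hU _ ?_ ?_
  · intro x hx
    have : x = fun _ => false := by
      funext i
      simp [ORf] at hx
      exact hx i
    rw [this]; exact hU0
  · intro x hx
    exact hU1 x (by simpa [ORf] using hx)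


/-- flip one bit -/
def flip {ι : Type} [DecidableEq ι] (a : ι → Bool) (l : ι) : ι → Bool := Function.update a l (!(a l))

lemma flip_flip {ι : Type} [DecidableEq ι] (l : ι) : Function.Involutive (fun a : ι → Bool => flip a l) := by
  intro a
  simp [flip]

lemma sens_le {n : ℕ} (f : (Fin n → Bool) → Bool) (a : Fin n → Bool) :
    (Finset.univ.filter (fun i : Fin n => f (flip a i) ≠ f a)).card ≤ sensitivity f :=
  Finset.le_sup (f := fun a : Fin n → Bool =>
    (Finset.univ.filter (fun i : Fin n => f (Function.update a i (!(a i))) ≠ f a)).card) (Finset.mem_univ a)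

lemma sens_le_n {n : ℕ} (f : (Fin n → Bool) → Bool) : sensitivity f ≤ n := by
  unfold sensitivity
  apply Finset.sup_le
  intro a _
  exact (Finset.card_le_univ _).trans (by simp)

lemma br_not (b : Bool) : br (!b) = 1 - br b := by cases b <;> simp [br]

lemma OR_bound {n : ℕ} (f : (Fin n → Bool) → Bool) (K Q : ℕ)
    (hK : Nat.log 2 n + 2 ≤ K) (hQ : 2 * K ≤ 2^Q) :
    pdeg (1/3) (ORf (sensitivity f)) ≤ 11*((Q+1)*(2*(12*Q+32)*pdeg (1/3) f)) := by
  obtain ⟨a, -, ha⟩ := Finset.exists_mem_eq_sup (Finset.univ : Finset (Fin n → Bool)) Finset.univ_nonempty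
    (fun a : Fin n → Bool =>
    (Finset.univ.filter (fun i : Fin n => f (Function.update a i (!(a i))) ≠ f a)).card)
  change sensitivity f = _ at ha
  set s := sensitivity f with hs
  set X := (Finset.univ.filter (fun i : Fin n => f (Function.update a i (!(a i))) ≠ f a)) with hX
  let e : X ≃ Fin s := X.equivFinOfCardEq ha.symm
  let y : (Fin s → Bool) → Fin n → Bool := fun z l =>
    if h : l ∈ X then xor (a l) (z (e ⟨l, h⟩)) else a l
  have hy : ∀ l, LowDeg 1 (fun z => br (y z l)) := by
    intro l
    by_cases h : l ∈ X
    · simp only [y, h, dif_pos]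
      cases a l
      · simpa using LowDeg.var (e ⟨l, h⟩)
      · simpa [br_not] using (LowDeg.const 1 1).sub (LowDeg.var (e ⟨l, h⟩))
    · simpa [y, h] using LowDeg.const 1 (br (a l))
  have hg := (HasRF.pdeg f).subst y hy
  have hy0 : y (fun _ => false) = a := by
    funext l; by_cases h : l ∈ X <;> simp [y, h]
  have hy1 : ∀ i, f (y (fun l => decide (l = i))) ≠ f a := by
    intro i
    have hi := (e.symm i).2
    have : y (fun l => decide (l = i)) = Function.update a (e.symm i).1 (!(a (e.symm i).1)) := by
      funext l
      by_cases hl : l = (e.symm i).1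
      · subst hl
        simp [y]
      · rw [Function.update_of_ne hl]
        by_cases h : l ∈ X
        · have : e ⟨l, h⟩ ≠ i := by
            intro h2; apply hl; rw [← h2]; simp
          simp [y, h, this]
        · simp [y, h]
    rw [this]
    exact (Finset.mem_filter.1 hi).2
  have hsn : Nat.log 2 s + 2 ≤ K := by
    have := Nat.log_mono_right (b := 2) (sens_le_n f)
    rw [← hs] at this
    omega
  apply HasRF.pdeg_le
  cases hfa : f a
  · refine or_of_ORlike ⟨?_, ?_⟩ hg K Q hsn hQ
    · rw [hy0, hfa]
    · intro i; have := hy1 i; rw [hfa] at this; simpa using this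
  · refine or_of_ORlike ⟨?_, ?_⟩ hg.not K Q hsn hQ
    · rw [hy0, hfa]; rfl
    · intro i; have := hy1 i; rw [hfa] at this; simpa using this

section noise
variable {ι : Type} [Fintype ι] [DecidableEq ι]

lemma noise_deriv (G : (ι → Bool) → Bool) (s : ℕ)
    (hs : ∀ t, (Finset.univ.filter (fun l => G (flip t l) ≠ G t)).card ≤ s)
    (c : (ι → Bool) → ℝ) (hc : ∀ t l, c t - c (flip t l) ≤ if G (flip t l) ≠ G t then 1 else 0)
    (p : ι → ℝ) (q : ι → ℝ) (P : ℝ) (hp0 : ∀ l, 0 ≤ p l) (hpP : ∀ l, p l ≤ P)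
    (hq0 : ∀ l, 0 ≤ q l) (hq1 : ∀ l, q l ≤ 1) (hP : 0 ≤ P) :
    ∑ t : ι → Bool, (∑ l, (∏ j ∈ Finset.univ.erase l, ber (q j) (t j)) * ((if t l then 1 else -1) * p l)) * c t
      ≤ P * s := by
  have hb : ∀ l, IsPr (ber (q l)) := fun l => ber_pr (hq0 l) (hq1 l)
  have hW : IsPr (prodW (fun l => ber (q l))) := IsPr_prod hb
  set W := prodW (fun l => ber (q l)) with hWd
  let V : ι → (ι → Bool) → ℝ := fun l t => ∏ j ∈ Finset.univ.erase l, ber (q j) (t j)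
  have hV0 : ∀ l t, 0 ≤ V l t := fun l t => Finset.prod_nonneg fun j _ => (hb j).1 _
  have hVf : ∀ l t, V l (flip t l) = V l t := by
    intro l t
    apply Finset.prod_congr rfl
    intro j hj
    rw [flip, Function.update_of_ne (Finset.ne_of_mem_erase hj)]
  have hWV : ∀ l t, W t = ber (q l) (t l) * V l t := by
    intro l t
    exact (Finset.mul_prod_erase Finset.univ (fun j => ber (q j) (t j)) (Finset.mem_univ l)).symm
  let piv : ι → (ι → Bool) → ℝ := fun l t => if G (flip t l) ≠ G t then 1 else 0
  have hpf : ∀ l t, piv l (flip t l) = piv l t := by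
    intro l t
    have := flip_flip l t
    simp only at this
    simp only [piv, this]
    simp only [ne_comm]
  have hpiv0 : ∀ l t, 0 ≤ piv l t := fun l t => by simp only [piv]; split_ifs <;> norm_num
  have hsym : ∀ l (H : (ι → Bool) → ℝ), ∑ t, H (flip t l) = ∑ t, H t := fun l H =>
    Equiv.sum_comp ((flip_flip l).toPerm) H
  have hfl : ∀ l (t : ι → Bool), flip t l l = !(t l) := by intro l t; simp [flip]
  have key : ∀ l, ∑ t, V l t * (if t l then 1 else -1) * c t ≤ ∑ t, W t * piv l t := by
    intro l
    have h1 := hsym l (fun t => V l t * (if t l then 1 else -1) * c t)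
    have h2 := hsym l (fun t => W t * piv l t)
    have h3 : ∑ t, V l t * (if t l then 1 else -1) * c t +
        ∑ t, V l (flip t l) * (if (flip t l) l then 1 else -1) * c (flip t l)
        ≤ ∑ t, W t * piv l t + ∑ t, W (flip t l) * piv l (flip t l) := by
      rw [← Finset.sum_add_distrib, ← Finset.sum_add_distrib]
      apply Finset.sum_le_sum
      intro t _
      rw [hWV l t, hWV l (flip t l), hVf, hpf, hfl]
      have e1 := hc t l
      have e2 := hc (flip t l) l
      have e3 : flip (flip t l) l = t := flip_flip l t
      rw [e3] at e2
      have e4 : c (flip t l) - c t ≤ piv l t := by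
        rw [← hpf]; simp only [piv]; rw [e3]; exact e2
      have e5 : c t - c (flip t l) ≤ piv l t := e1
      have hv := hV0 l t
      cases ht : t l
      · simp [ber]
        nlinarith [mul_le_mul_of_nonneg_left e4 hv]
      · simp [ber]
        nlinarith [mul_le_mul_of_nonneg_left e5 hv]
    rw [h1, h2] at h3
    linarith
  have hsw : ∑ t : ι → Bool, (∑ l, V l t * ((if t l then 1 else -1) * p l)) * c t
      = ∑ l, p l * ∑ t, V l t * (if t l then 1 else -1) * c t := by
    simp_rw [Finset.sum_mul, Finset.mul_sum]
    rw [Finset.sum_comm]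
    refine Finset.sum_congr rfl fun l _ => Finset.sum_congr rfl fun t _ => by ring
  change ∑ t : ι → Bool, (∑ l, V l t * ((if t l then 1 else -1) * p l)) * c t ≤ _
  rw [hsw]
  calc ∑ l, p l * ∑ t, V l t * (if t l then 1 else -1) * c t
      ≤ ∑ l, P * ∑ t, W t * piv l t := by
        apply Finset.sum_le_sum
        intro l _
        have : 0 ≤ ∑ t, W t * piv l t :=
          Finset.sum_nonneg fun t _ => mul_nonneg (hW.1 t) (hpiv0 l t)
        exact (mul_le_mul_of_nonneg_left (key l) (hp0 l)).trans
          (mul_le_mul_of_nonneg_right (hpP l) this)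
    _ = P * ∑ t, W t * ∑ l, piv l t := by
        rw [← Finset.mul_sum, Finset.sum_comm]
        simp_rw [Finset.mul_sum]
    _ ≤ P * ∑ t, W t * s := by
        apply mul_le_mul_of_nonneg_left _ hP
        apply Finset.sum_le_sum
        intro t _
        apply mul_le_mul_of_nonneg_left _ (hW.1 t)
        have := hs t
        simp only [piv]
        rw [Finset.sum_boole]
        exact_mod_cast this
    _ = P * s := by rw [← Finset.sum_mul, hW.2, one_mul]

lemma noise (G : (ι → Bool) → Bool) (s : ℕ)
    (hs : ∀ t, (Finset.univ.filter (fun l => G (flip t l) ≠ G t)).card ≤ s)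
    (p : ι → ℝ) (P : ℝ) (hp0 : ∀ l, 0 ≤ p l) (hpP : ∀ l, p l ≤ P) (hP : 0 ≤ P) (hP1 : P ≤ 1) :
    Pr (prodW (fun l => ber (p l))) (fun t => G t ≠ G (fun _ => false)) ≤ P * s := by
  let c : (ι → Bool) → ℝ := fun t => if G t ≠ G (fun _ => false) then 1 else 0
  have hc : ∀ t l, c t - c (flip t l) ≤ if G (flip t l) ≠ G t then 1 else 0 := by
    intro t l
    simp only [c]
    generalize G (flip t l) = x
    generalize G t = y
    generalize G (fun _ => false) = z
    cases x <;> cases y <;> cases z <;> simp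
  let φ : ℝ → ℝ := fun θ => ∑ t : ι → Bool, (∏ l, ber (θ * p l) (t l)) * c t
  let φ' : ℝ → ℝ := fun θ => ∑ t : ι → Bool, (∑ l, (∏ j ∈ Finset.univ.erase l, ber (θ * p j) (t j)) * ((if t l then 1 else -1) * p l)) * c t
  have hd : ∀ θ, HasDerivAt φ (φ' θ) θ := by
    intro θ
    apply HasDerivAt.fun_sum
    intro t _
    apply HasDerivAt.mul_const
    have := HasDerivAt.fun_finsetProd (u := Finset.univ) (f := fun l θ => ber (θ * p l) (t l))
      (f' := fun l => (if t l then 1 else -1) * p l) (x := θ) (by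
        intro l _
        cases t l
        · simp only [ber]
          simpa using ((hasDerivAt_id θ).mul_const (p l)).const_sub 1
        · simp only [ber]
          simpa using ((hasDerivAt_id θ).mul_const (p l)))
    simpa [smul_eq_mul] using this
  obtain ⟨θ, hθ, he⟩ := exists_hasDerivAt_eq_slope φ φ' (by norm_num : (0:ℝ) < 1)
    (fun x _ => (hd x).continuousAt.continuousWithinAt) (fun x _ => hd x)
  have h0 : φ 0 = 0 := by
    apply Finset.sum_eq_zero
    intro t _
    by_cases ht : ∃ l, t l = true
    · obtain ⟨l, hl⟩ := ht
      rw [Finset.prod_eq_zero (Finset.mem_univ l), zero_mul]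
      simp [ber, hl]
    · have : t = fun _ => false := by
        funext l; push Not at ht; simpa using ht l
      simp [c, this]
  have h1 : φ 1 = Pr (prodW (fun l => ber (p l))) (fun t => G t ≠ G (fun _ => false)) := by
    simp only [φ, Pr, c, prodW, one_mul]
    congr!
  rw [← h1]
  have := noise_deriv G s hs c hc p (fun l => θ * p l) P hp0 hpP
    (fun l => mul_nonneg hθ.1.le (hp0 l))
    (fun l => by nlinarith [hp0 l, hpP l, hθ.1, hθ.2]) hP
  have h2 : φ' θ ≤ P * s := this
  rw [he, h0] at h2
  simpa using h2

end noise


/-- the point with support S (off i) and value b at i -/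
def xb {n : ℕ} (S : Finset (Fin n)) (i : Fin n) (b : Bool) (l : Fin n) : Bool :=
  if l = i then b else decide (l ∈ S)

lemma xb_erase {n : ℕ} (S : Finset (Fin n)) (i : Fin n) (b : Bool) (l : Fin n) (hi : i ∉ S) (hl : l ∈ S) :
    xb (S.erase l) i b = flip (xb S i b) l := by
  have hli : l ≠ i := fun h => hi (h ▸ hl)
  funext k
  by_cases hk : k = l
  · subst hk; simp [xb, flip, hli, hl]
  · rw [flip, Function.update_of_ne hk]
    simp [xb, hk]

lemma simon {n : ℕ} (f : (Fin n → Bool) → Bool) (hf : TrulyVariate f) (i : Fin n) :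
    ∃ S : Finset (Fin n), i ∉ S ∧ S.card ≤ 2 * sensitivity f ∧ f (xb S i true) ≠ f (xb S i false) := by
  let A := Finset.univ.filter (fun S : Finset (Fin n) => i ∉ S ∧ f (xb S i true) ≠ f (xb S i false))
  have hA : A.Nonempty := by
    obtain ⟨a, ha0⟩ := hf i
    have ha : f (Function.update a i (!(a i))) ≠ f a := by convert ha0
    refine ⟨Finset.univ.filter (fun l => l ≠ i ∧ a l = true), ?_⟩
    have h1 : ∀ b, xb (Finset.univ.filter (fun l => l ≠ i ∧ a l = true)) i b = Function.update a i b := by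
      intro b
      funext l
      by_cases hl : l = i
      · subst hl; simp [xb]
      · simp [xb, hl]
    simp only [A, Finset.mem_filter, Finset.mem_univ, true_and, h1]
    refine ⟨by simp, ?_⟩
    have h2 : Function.update a i (a i) = a := Function.update_eq_self i a
    cases hai : a i
    · rw [hai] at ha h2
      rw [h2]; exact ha
    · rw [hai] at ha h2
      rw [h2]; exact ha.symm
  obtain ⟨S, hSA, hmin⟩ := Finset.exists_min_image A Finset.card hA
  obtain ⟨hiS, hS⟩ := (Finset.mem_filter.1 hSA).2
  refine ⟨S, hiS, ?_, hS⟩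
  have hsub : S ⊆ (Finset.univ.filter (fun l => f (flip (xb S i true) l) ≠ f (xb S i true))) ∪
      (Finset.univ.filter (fun l => f (flip (xb S i false) l) ≠ f (xb S i false))) := by
    intro l hl
    by_contra hcon
    simp only [Finset.mem_union, Finset.mem_filter, Finset.mem_univ, true_and, not_or, not_not] at hcon
    have hmem : S.erase l ∈ A := by
      simp only [A, Finset.mem_filter, Finset.mem_univ, true_and]
      refine ⟨fun h => hiS (Finset.mem_of_mem_erase h), ?_⟩
      rw [xb_erase S i _ l hiS hl, xb_erase S i _ l hiS hl, hcon.1, hcon.2]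
      exact hS
    have := hmin _ hmem
    have := Finset.card_erase_lt_of_mem hl
    omega
  have h1 := Finset.card_le_card hsub
  have h2 := Finset.card_union_le (Finset.univ.filter (fun l => f (flip (xb S i true) l) ≠ f (xb S i true)))
      (Finset.univ.filter (fun l => f (flip (xb S i false) l) ≠ f (xb S i false)))
  have h3 := sens_le f (xb S i true)
  have h4 := sens_le f (xb S i false)
  omega

/-- uniform weight on buckets and bits -/
def wh (N : ℕ) (_ : Fin (N+1) × Bool) : ℝ := 1 / (2 * ((N:ℝ)+1))

lemma wh_pr (N : ℕ) : IsPr (wh N) := by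
  refine ⟨fun _ => by unfold wh; positivity, ?_⟩
  have : ((N:ℝ)+1) ≠ 0 := by positivity
  simp [wh]
  field_simp

lemma wh_bucket (N : ℕ) (b : Fin (N+1)) : Pr (wh N) (fun o => o.1 = b) = 1 / ((N:ℝ)+1) := by
  unfold Pr wh
  rw [Fintype.sum_prod_type, Finset.sum_eq_single b]
  · simp; field_simp
  · intro c _ hc; simp [hc]
  · simp

/-- hashed point -/
def yh {n N : ℕ} (S : Finset (Fin n)) (ω : Fin n → Fin (N+1) × Bool) (l : Fin n) : Bool :=
  if (ω l).1 = 0 then (ω l).2 else decide (∃ k ∈ S, (ω k).1 = (ω l).1)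

/-- use u on S and i, and v elsewhere -/
def mrg {n : ℕ} {β : Type} (S : Finset (Fin n)) (i : Fin n) (u v : Fin n → β) (k : Fin n) : β :=
  @ite _ (k ∈ S ∨ k = i) (Classical.propDecidable _) (u k) (v k)

lemma hash_fixed {n N s : ℕ} (f : (Fin n → Bool) → Bool) (hs : sensitivity f ≤ s)
    (S : Finset (Fin n)) (i : Fin n) (hSc : S.card ≤ 2 * s) (hN : 2 * s ≤ N)
    (u : Fin n → Fin (N+1) × Bool) (hu : (u i).1 = 0) (huS : ∀ k ∈ S, (u k).1 ≠ 0) :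
    Pr (prodW (fun _ : Fin n => wh N))
      (fun v => f (yh S (mrg S i u v)) ≠ f (xb S i (u i).2))
      ≤ (2 * s + 1) / ((N:ℝ)+1) * s := by
  let φ : Fin n → Fin (N+1) × Bool → Bool := fun l o =>
    if l ∈ S ∨ l = i then false else if o.1 = 0 then o.2 else decide (∃ k ∈ S, (u k).1 = o.1)
  let G : (Fin n → Bool) → Bool := fun t => f (fun l => xor (xb S i (u i).2 l) (t l))
  have hG0 : G (fun _ => false) = f (xb S i (u i).2) := by simp [G]
  have hy : ∀ v : Fin n → Fin (N+1) × Bool,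
      f (yh S (mrg S i u v)) = G (fun l => φ l (v l)) := by
    intro v
    simp only [G]
    congr 1
    funext l
    have hex : ∀ b : Fin (N+1), (∃ k ∈ S, (mrg S i u v k).1 = b) ↔ ∃ k ∈ S, (u k).1 = b := by
      intro b
      constructor
      · rintro ⟨k, hk, h⟩; exact ⟨k, hk, by simpa [hk, mrg] using h⟩
      · rintro ⟨k, hk, h⟩; exact ⟨k, hk, by simpa [hk, mrg] using h⟩
    unfold yh
    simp only [hex]
    unfold mrg
    by_cases hl : l = i
    · simp [hl, φ, hu, xb]
    · by_cases hlS : l ∈ S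
      · simp only [hlS, true_or, if_true, φ, xb, hl, if_false, huS l hlS]
        simp
        exact ⟨l, hlS, rfl⟩
      · simp [hl, hlS, φ, xb]
  simp_rw [hy, ← hG0]
  let p : Fin n → ℝ := fun l => Pr (wh N) (fun o => φ l o = true)
  have hber : (fun k o' => Pr (wh N) (fun o => φ k o = o')) = fun l => ber (p l) := by
    funext l b
    cases b
    · have := Pr_not (wh_pr N) (fun o => φ l o = true)
      simp only [Bool.not_eq_true] at this
      simpa [ber, p] using this
    · simp [ber, p]
  have hpush : Pr (prodW (fun _ : Fin n => wh N)) (fun v => G (fun l => φ l (v l)) ≠ G (fun _ => false))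
      = Pr (prodW (fun l => ber (p l))) (fun t => G t ≠ G (fun _ => false)) := by
    rw [← hber]
    exact pushforward (fun _ : Fin n => wh N) φ (fun t => @ite ℝ (G t ≠ G (fun _ => false)) (Classical.propDecidable _) 1 0)
  rw [hpush]
  have hN1 : (0:ℝ) < (N:ℝ) + 1 := by positivity
  refine noise G s ?_ p _ (fun l => Pr_nonneg (wh_pr N) _) ?_ (by positivity) ?_
  · intro t
    refine le_trans (le_of_eq ?_) ((sens_le f (fun l => xor (xb S i (u i).2 l) (t l))).trans hs)
    congr 1
    ext l
    simp only [Finset.mem_filter, Finset.mem_univ, true_and, G]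
    have : (fun k => xor (xb S i (u i).2 k) (flip t l k)) = flip (fun l => xor (xb S i (u i).2 l) (t l)) l := by
      funext k
      by_cases hk : k = l
      · subst hk; simp [flip]
      · simp [flip, Function.update_of_ne hk]
    rw [this]
  · intro l
    have h1 : p l ≤ Pr (wh N) (fun o => o.1 = 0 ∨ ∃ k ∈ S, o.1 = (u k).1) := by
      apply Pr_mono (wh_pr N)
      intro o ho
      simp only [φ] at ho
      split_ifs at ho with ha hb
      · left; exact hb
      · right
        obtain ⟨k, hk, h⟩ := of_decide_eq_true ho
        exact ⟨k, hk, h.symm⟩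
    refine h1.trans ((Pr_or (wh_pr N) _ _).trans ?_)
    have h2 := Pr_exists (wh_pr N) S (fun k o => o.1 = (u k).1)
    simp only [wh_bucket] at h2
    rw [wh_bucket]
    rw [Finset.sum_const, nsmul_eq_mul] at h2
    have h3 : (S.card : ℝ) * (1 / ((N:ℝ)+1)) ≤ (2*s) * (1 / ((N:ℝ)+1)) := by
      apply mul_le_mul_of_nonneg_right _ (by positivity)
      exact_mod_cast hSc
    have h4 : (2 * (s:ℝ) + 1) / ((N:ℝ)+1) = (2*s) * (1 / ((N:ℝ)+1)) + 1 / ((N:ℝ)+1) := by ring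
    rw [h4]
    linarith
  · rw [div_le_one hN1]
    have : (2 * s : ℝ) ≤ N := by exact_mod_cast hN
    linarith

lemma hash {n N s : ℕ} (f : (Fin n → Bool) → Bool) (hs : sensitivity f ≤ s) (hs1 : 1 ≤ s)
    (S : Finset (Fin n)) (i : Fin n) (hiS : i ∉ S) (hSc : S.card ≤ 2 * s) (hN : 2 * s ≤ N) :
    Pr (prodW (fun _ : Fin n => wh N))
      (fun ω => (ω i).1 = 0 ∧ f (yh S ω) ≠ f (xb S i (ω i).2))
      ≤ 5 * (s:ℝ)^2 / ((N:ℝ)+1)^2 := by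
  have hP : IsPr (prodW (fun _ : Fin n => wh N)) := IsPr_prod (fun _ => wh_pr N)
  set W := prodW (fun _ : Fin n => wh N) with hW
  have hN1 : (0:ℝ) < (N:ℝ) + 1 := by positivity
  let E' : (Fin n → Fin (N+1) × Bool) → Prop := fun ω => (ω i).1 = 0 ∧ (∀ k ∈ S, (ω k).1 ≠ 0) ∧
    f (yh S ω) ≠ f (xb S i (ω i).2)
  have h1 : Pr W (fun ω => (ω i).1 = 0 ∧ f (yh S ω) ≠ f (xb S i (ω i).2)) ≤
      Pr W (fun ω => ∃ k ∈ S, (ω i).1 = 0 ∧ (ω k).1 = 0) + Pr W E' := by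
    refine le_trans (Pr_mono hP ?_) (Pr_or hP _ _)
    rintro ω ⟨ha, hb⟩
    by_cases h : ∃ k ∈ S, (ω k).1 = 0
    · left
      obtain ⟨k, hk, h⟩ := h
      exact ⟨k, hk, ha, h⟩
    · right
      push Not at h
      exact ⟨ha, h, hb⟩
  have h2 : Pr W (fun ω => ∃ k ∈ S, (ω i).1 = 0 ∧ (ω k).1 = 0) ≤ 2 * s * (1 / ((N:ℝ)+1)^2) := by
    refine (Pr_exists hP _ _).trans ?_
    have : ∀ k ∈ S, Pr W (fun ω => (ω i).1 = 0 ∧ (ω k).1 = 0) = 1 / ((N:ℝ)+1)^2 := by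
      intro k hk
      have := Pr_two (fun _ : Fin n => wh_pr N) i k (fun h => hiS (h ▸ hk)) (fun o => o.1 = 0) (fun o => o.1 = 0)
      rw [hW, this, wh_bucket]
      field_simp
    rw [Finset.sum_congr rfl this, Finset.sum_const, nsmul_eq_mul]
    apply mul_le_mul_of_nonneg_right _ (by positivity)
    exact_mod_cast hSc
  have h3 : Pr W E' ≤ 1 / ((N:ℝ)+1) * ((2 * s + 1) / ((N:ℝ)+1) * s) := by
    have hr := resample (fun _ : Fin n => wh N) hP (fun k => k ∈ S ∨ k = i)
      (fun ω => @ite ℝ (E' ω) (Classical.propDecidable _) 1 0)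
    have hr2 : Pr W E' = ∑ u, W u * Pr W (fun v => E' (mrg S i u v)) := by
      exact hr.symm
    rw [hr2]
    calc ∑ u, W u * Pr W (fun v => E' (mrg S i u v))
        ≤ ∑ u, W u * ((@ite ℝ ((u i).1 = 0) (Classical.propDecidable _) 1 0) * ((2 * s + 1) / ((N:ℝ)+1) * s)) := by
          apply Finset.sum_le_sum
          intro u _
          apply mul_le_mul_of_nonneg_left _ (hP.1 u)
          by_cases hu : (u i).1 = 0
          · rw [if_pos hu, one_mul]
            by_cases huS : ∀ k ∈ S, (u k).1 ≠ 0
            · refine (Pr_mono hP ?_).trans (hash_fixed f hs S i hSc hN u hu huS)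
              intro v hv
              simpa [mrg] using hv.2.2
            · have : Pr W (fun v => E' (mrg S i u v)) ≤ 0 := by
                refine (Pr_mono hP (F := fun _ => False) ?_).trans (by simp [Pr])
                intro v hv
                apply huS
                intro k hk
                have := hv.2.1 k hk
                simpa [hk, mrg] using this
              exact this.trans (by positivity)
          · rw [if_neg hu, zero_mul]
            refine (Pr_mono hP (F := fun _ => False) ?_).trans (by simp [Pr])
            intro v hv
            apply hu
            simpa [mrg] using hv.1
      _ = Pr W (fun u => (u i).1 = 0) * ((2 * s + 1) / ((N:ℝ)+1) * s) := by
          unfold Pr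
          rw [Finset.sum_mul]
          exact Finset.sum_congr rfl fun u _ => by rw [mul_assoc]
      _ = _ := by
          rw [hW, Pr_marg (fun _ : Fin n => wh_pr N) i (fun o => o.1 = 0), wh_bucket]
  refine h1.trans ((add_le_add h2 h3).trans ?_)
  have hs' : (1:ℝ) ≤ s := by exact_mod_cast hs1
  have e : 2 * (s:ℝ) * (1 / ((N:ℝ)+1)^2) + 1 / ((N:ℝ)+1) * ((2 * s + 1) / ((N:ℝ)+1) * s)
      = (2 * s + (2*s+1)*s) / ((N:ℝ)+1)^2 := by field_simp
  rw [e]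
  apply div_le_div_of_nonneg_right _ (by positivity)
  nlinarith


lemma list_prod_opt {β : Type} (φ : β → ℝ) (d : ℕ) (L : List β) (h : L.length ≤ d) :
    ∏ j : Fin d, ((L[j.val]?).elim 1 φ) = (L.map φ).prod := by
  induction d generalizing L with
  | zero =>
    have : L = [] := List.length_eq_zero_iff.1 (by omega)
    subst this; simp
  | succ d ih =>
    rw [Fin.prod_univ_succ]
    cases L with
    | nil => simp
    | cons a L =>
      simp only [List.length_cons] at h
      have := ih L (by omega)
      simpa using congrArg (φ a * ·) this

lemma lowdeg_span {κ : Type} (d : ℕ) (F : (κ → Bool) → ℝ) (hF : LowDeg d F) :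
    F ∈ Submodule.span ℝ (Set.range (fun (g : Fin d → Option κ) (z : κ → Bool) =>
      ∏ j, (g j).elim 1 (fun b => br (z b)))) := by
  obtain ⟨P, h1, h2⟩ := hF
  have e : F = ∑ m ∈ P.support, P.coeff m • (fun z : κ → Bool => ∏ i ∈ m.support, br (z i)) := by
    funext z
    rw [← h2, evalBool, MvPolynomial.eval_eq, Finset.sum_apply]
    apply Finset.sum_congr rfl
    intro m _
    rw [Pi.smul_apply, smul_eq_mul]
    congr 1
    apply Finset.prod_congr rfl
    intro i hi
    have : m i ≠ 0 := Finsupp.mem_support_iff.1 hi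
    cases z i <;> simp [br, this]
  rw [e]
  apply Submodule.sum_mem
  intro m hm
  apply Submodule.smul_mem
  apply Submodule.subset_span
  have hc : m.support.card ≤ d := by
    have h3 := MvPolynomial.le_totalDegree hm
    have h4 : m.support.card ≤ m.sum fun _ e => e := by
      rw [Finsupp.sum, Finset.card_eq_sum_ones]
      apply Finset.sum_le_sum
      intro i hi
      have : m i ≠ 0 := Finsupp.mem_support_iff.1 hi
      omega
    omega
  refine ⟨fun j => m.support.toList[j.val]?, ?_⟩
  funext z
  beta_reduce
  rw [list_prod_opt (fun b => br (z b)) d _ (by simpa using hc)]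
  simp

lemma select {ι : Type} [Fintype ι] (G : Finset ι) (k : ℕ) (W : Submodule ℝ (ι → ℝ))
    (hW : Module.finrank ℝ W ≤ k) :
    ∃ B ⊆ G, B.card ≤ k ∧ ∀ w ∈ W, (∀ i ∈ B, w i = 0) → ∀ i ∈ G, w i = 0 := by
  induction k generalizing W with
  | zero =>
    have : W = ⊥ := Submodule.finrank_eq_zero.1 (by omega)
    subst this
    refine ⟨∅, by simp, by simp, fun w hw _ i _ => ?_⟩
    rw [Submodule.mem_bot] at hw
    simp [hw]
  | succ k ih =>
    by_cases h : ∀ w ∈ W, ∀ i ∈ G, w i = 0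
    · exact ⟨∅, by simp, by simp, fun w hw _ => h w hw⟩
    · push Not at h
      obtain ⟨w, hw, i, hi, hwi⟩ := h
      have hlt : W ⊓ LinearMap.ker (LinearMap.proj i : (ι → ℝ) →ₗ[ℝ] ℝ) < W := by
        refine lt_of_le_of_ne inf_le_left fun heq => hwi ?_
        rw [← heq] at hw
        simpa using hw.2
      have := Submodule.finrank_lt_finrank_of_lt hlt
      obtain ⟨B, hB, hBc, hBw⟩ := ih _ (by omega : Module.finrank ℝ ↥(W ⊓ LinearMap.ker (LinearMap.proj i : (ι → ℝ) →ₗ[ℝ] ℝ)) ≤ k)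
      refine ⟨insert i B, Finset.insert_subset hi hB, (Finset.card_insert_le _ _).trans (by omega), ?_⟩
      intro v hv hv0
      apply hBw v ⟨hv, ?_⟩
      · intro j hj; exact hv0 j (Finset.mem_insert_of_mem hj)
      · simpa using hv0 i (Finset.mem_insert_self _ _)

lemma small_sets {ι : Type} (J : Finset ι) :
    (J.powerset.filter (fun T => 40 * T.card ≤ J.card)).card ^ 5 ≤ 2 ^ J.card := by
  set m := J.card with hm
  set S := (J.powerset.filter (fun T => 40 * T.card ≤ m)).card with hS
  have h1 : (S:ℝ) * (1/16)^(m/40) ≤ (17/16)^m := by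
    calc (S:ℝ) * (1/16)^(m/40) = ∑ T ∈ J.powerset.filter (fun T => 40 * T.card ≤ m), ((1:ℝ)/16)^(m/40) := by
          rw [Finset.sum_const, nsmul_eq_mul]
      _ ≤ ∑ T ∈ J.powerset.filter (fun T => 40 * T.card ≤ m), ((1:ℝ)/16)^(T.card) := by
          apply Finset.sum_le_sum
          intro T hT
          have := (Finset.mem_filter.1 hT).2
          exact pow_le_pow_of_le_one (by norm_num) (by norm_num) (by omega)
      _ ≤ ∑ T ∈ J.powerset, ((1:ℝ)/16)^(T.card) :=
          Finset.sum_le_sum_of_subset_of_nonneg (Finset.filter_subset _ _) (fun _ _ _ => by positivity)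
      _ = (17/16)^m := by
          have := Finset.prod_add (fun _ : ι => (1:ℝ)/16) (fun _ => 1) J
          simp only [Finset.prod_const, one_pow, mul_one] at this
          rw [← this, ← hm]; norm_num
  have h2 : ((S:ℝ))^40 ≤ (2^m)^8 := by
    have h3 := pow_le_pow_left₀ (by positivity) h1 40
    rw [mul_pow, ← pow_mul] at h3
    have h4 : ((1:ℝ)/16)^m ≤ (1/16)^(m/40*40) := pow_le_pow_of_le_one (by norm_num) (by norm_num) (by omega)
    have h5 : ((S:ℝ))^40 * (1/16)^m ≤ ((17/16)^m)^40 :=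
      (mul_le_mul_of_nonneg_left h4 (by positivity)).trans h3
    have h6 : ((1:ℝ)/16)^m * 16^m = 1 := by rw [← mul_pow]; norm_num
    calc ((S:ℝ))^40 = ((S:ℝ))^40 * (1/16)^m * 16^m := by rw [mul_assoc, h6, mul_one]
      _ ≤ ((17/16)^m)^40 * 16^m := mul_le_mul_of_nonneg_right h5 (by positivity)
      _ = ((17/16)^40 * 16)^m := by rw [mul_pow, ← pow_mul, ← pow_mul, mul_comm m 40]
      _ ≤ (2^8)^m := pow_le_pow_left₀ (by norm_num) (by norm_num) _
      _ = (2^m)^8 := by rw [← pow_mul, ← pow_mul, mul_comm]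
  have h7 : ((S:ℝ)^5)^8 ≤ (2^m)^8 := by rw [← pow_mul]; exact h2
  have h8 : (S:ℝ)^5 ≤ 2^m := le_of_pow_le_pow_left₀ (by norm_num) (by positivity) h7
  exact_mod_cast h8

/-- Decoding count: a family of words each close to a low-dimensional space is small. -/
lemma decode_count {n : ℕ} (J : Finset (Fin n)) (W : Submodule ℝ (Fin n → ℝ))
    (hW : 40 * Module.finrank ℝ W ≤ J.card) (A : Finset (Fin n → Bool))
    (v : Fin n → Bool → ℝ) (hv : ∀ i, v i true ≠ v i false)
    (vec : (Fin n → Bool) → Fin n → ℝ) (hvec : ∀ a ∈ A, vec a ∈ W)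
    (herr : ∀ a ∈ A, 40 * (J.filter (fun i => vec a i ≠ v i (a i))).card ≤ J.card) :
    A.card ≤ 2^(n - J.card) * (J.powerset.filter (fun T => 40 * T.card ≤ J.card)).card ^ 3 := by
  set P := J.powerset.filter (fun T => 40 * T.card ≤ J.card) with hP
  choose B hB1 hB2 hB3 using fun D : Finset (Fin n) => select (J \ D) _ W le_rfl
  let Dm : (Fin n → Bool) → Finset (Fin n) := fun a => J.filter (fun i => vec a i ≠ v i (a i))
  let Ψ : (Fin n → Bool) → Finset (Fin n) × Finset (Fin n) × Finset (Fin n) × Finset (Fin n) := fun a =>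
    ((Finset.univ \ J).filter (fun i => a i = true), Dm a, (Dm a).filter (fun i => a i = true),
      (B (Dm a)).filter (fun i => a i = true))
  have hcard : ((Finset.univ \ J).powerset ×ˢ (P ×ˢ (P ×ˢ P))).card = 2^(n - J.card) * P.card ^ 3 := by
    simp only [Finset.card_product, Finset.card_powerset]
    rw [Finset.card_sdiff_of_subset (Finset.subset_univ _), Finset.card_univ, Fintype.card_fin]
    ring
  rw [← hcard]
  apply Finset.card_le_card_of_injOn Ψ
  · intro a ha
    have ha : a ∈ A := ha
    have h1 := herr a ha
    have hDJ : Dm a ⊆ J := Finset.filter_subset _ _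
    have hBJ : B (Dm a) ⊆ J := (hB1 _).trans Finset.sdiff_subset
    simp only [Finset.coe_product, Set.mem_prod, Finset.mem_coe, Finset.mem_powerset, Ψ, hP, Finset.mem_filter]
    refine ⟨Finset.filter_subset _ _, ⟨hDJ, h1⟩, ⟨(Finset.filter_subset _ _).trans hDJ, ?_⟩,
      ⟨(Finset.filter_subset _ _).trans hBJ, ?_⟩⟩
    · have := Finset.card_filter_le (Dm a) (fun i => a i = true)
      have h1 : 40 * (Dm a).card ≤ J.card := h1
      omega
    · have := Finset.card_filter_le (B (Dm a)) (fun i => a i = true)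
      have := hB2 (Dm a)
      omega
  · intro a ha a' ha' hΨ
    have ha : a ∈ A := ha
    have ha' : a' ∈ A := ha'
    simp only [Ψ, Prod.mk.injEq] at hΨ
    obtain ⟨e1, e2, e3, e4⟩ := hΨ
    rw [← e2] at e3 e4
    have tr : ∀ (X : Finset (Fin n)), X.filter (fun i => a i = true) = X.filter (fun i => a' i = true) →
        ∀ i ∈ X, a i = a' i := by
      intro X hX i hi
      have : i ∈ X.filter (fun i => a i = true) ↔ i ∈ X.filter (fun i => a' i = true) := by rw [hX]
      simp only [Finset.mem_filter, hi, true_and] at this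
      exact Bool.eq_iff_iff.2 this
    have t1 := tr _ e1
    have t3 := tr _ e3
    have t4 := tr _ e4
    have hG : ∀ i ∈ J \ Dm a, vec a i = v i (a i) ∧ vec a' i = v i (a' i) := by
      intro i hi
      have hi2 := hi
      rw [e2] at hi2
      simp only [Dm, Finset.mem_sdiff, Finset.mem_filter, not_and, not_not] at hi hi2
      exact ⟨hi.2 hi.1, hi2.2 hi2.1⟩
    have hz := hB3 (Dm a) (vec a - vec a') (W.sub_mem (hvec a ha) (hvec a' ha')) (by
      intro i hi
      have h1 := hG i (hB1 _ hi)
      rw [Pi.sub_apply, h1.1, h1.2, t4 i hi, sub_self])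
    funext i
    by_cases hJ : i ∈ J
    · by_cases hD : i ∈ Dm a
      · exact t3 i hD
      · have hi : i ∈ J \ Dm a := Finset.mem_sdiff.2 ⟨hJ, hD⟩
        have h1 := hG i hi
        have h2 := hz i hi
        rw [Pi.sub_apply, h1.1, h1.2, sub_eq_zero] at h2
        have h3 := hv i
        cases h5 : a i <;> cases h6 : a' i <;> rw [h5, h6] at h2
        · exact absurd h2.symm h3
        · exact absurd h2 h3
    · exact t1 i (Finset.mem_sdiff.2 ⟨Finset.mem_univ _, hJ⟩)


lemma sum_pairs {n : ℕ} {α β : Type} [Fintype α] [Fintype β] (F : (Fin n → α × β) → ℝ) :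
    ∑ ω, F ω = ∑ h : Fin n → α, ∑ A : Fin n → β, F (fun k => (h k, A k)) := by
  rw [← Fintype.sum_prod_type']
  exact (Equiv.sum_comp (Equiv.arrowProdEquivProdArrow (Fin n) (fun _ => α) (fun _ => β)).symm F).symm

lemma avg_exists {Ω : Type} [Fintype Ω] [Nonempty Ω] (X : Ω → ℝ) (c : ℝ)
    (h : (Fintype.card Ω : ℝ) * c ≤ ∑ ω, X ω) : ∃ ω, c ≤ X ω := by
  by_contra hcon
  push Not at hcon
  have := Finset.sum_lt_sum_of_nonempty (s := Finset.univ) Finset.univ_nonempty (fun ω _ => hcon ω)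
  simp at this
  linarith

lemma avg_exists_w {Ω : Type} [Fintype Ω] {w : Ω → ℝ} (hw : IsPr w) (X : Ω → ℝ) (c : ℝ)
    (h : ∑ ω, w ω * X ω ≤ c) : ∃ ω, X ω ≤ c := by
  by_contra hcon
  push Not at hcon
  have h1 : ∑ ω, w ω * (X ω - c) ≤ 0 := by
    simp_rw [mul_sub]
    rw [Finset.sum_sub_distrib, ← Finset.sum_mul, hw.2]
    linarith
  have h2 : ∀ ω ∈ Finset.univ, 0 ≤ w ω * (X ω - c) := fun ω _ =>
    mul_nonneg (hw.1 ω) (by linarith [hcon ω])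
  have h3 := (Finset.sum_eq_zero_iff_of_nonneg h2).1 (le_antisymm h1 (Finset.sum_nonneg h2))
  have h4 : ∀ ω, w ω = 0 := by
    intro ω
    have := h3 ω (Finset.mem_univ _)
    rcases mul_eq_zero.1 this with h | h
    · exact h
    · linarith [hcon ω]
  have := hw.2
  simp [h4] at this

lemma sum_ite_card {ι : Type} (s : Finset ι) (P : ι → Prop) (D : DecidablePred P) :
    ∑ i ∈ s, @ite ℝ (P i) (Classical.propDecidable _) 1 0 = ((@Finset.filter _ P D s).card : ℝ) := by
  rw [Finset.card_filter]
  push_cast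
  refine Finset.sum_congr rfl fun i _ => ?_
  by_cases h : P i <;> simp [h]

lemma hashJ {n N s : ℕ} (f : (Fin n → Bool) → Bool) (hs : sensitivity f ≤ s) (hs1 : 1 ≤ s)
    (S : Fin n → Finset (Fin n)) (hiS : ∀ i, i ∉ S i) (hSc : ∀ i, (S i).card ≤ 2 * s) (hN : 1600 * s^2 ≤ N) :
    ∃ h : Fin n → Fin (N+1),
      n ≤ 2 * (N+1) * (Finset.univ.filter (fun i => h i = 0)).card ∧
      ∑ A : Fin n → Bool, (((Finset.univ.filter (fun i => h i = 0)).filter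
        (fun i => f (yh (S i) (fun k => (h k, A k))) ≠ f (xb (S i) i (A i)))).card : ℝ)
        ≤ 2^n * ((Finset.univ.filter (fun i => h i = 0)).card / 160) := by
  have hN2 : 2 * s ≤ N := by nlinarith
  set M : ℝ := (N:ℝ) + 1 with hM
  have hM0 : 0 < M := by positivity
  have hP : IsPr (prodW (fun _ : Fin n => wh N)) := IsPr_prod (fun _ => wh_pr N)
  let I1 : (Fin n → Fin (N+1) × Bool) → Fin n → ℝ := fun ω i =>
    @ite ℝ ((ω i).1 = 0) (Classical.propDecidable _) 1 0
  let I2 : (Fin n → Fin (N+1) × Bool) → Fin n → ℝ := fun ω i =>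
    @ite ℝ ((ω i).1 = 0 ∧ f (yh (S i) ω) ≠ f (xb (S i) i (ω i).2)) (Classical.propDecidable _) 1 0
  let X : (Fin n → Fin (N+1) × Bool) → ℝ := fun ω => ∑ i, ((1/160) * I1 ω i - I2 ω i)
  have hX : (n:ℝ) * (1/(320*M)) ≤ ∑ ω, prodW (fun _ : Fin n => wh N) ω * X ω := by
    have e1 : ∑ ω, prodW (fun _ : Fin n => wh N) ω * X ω = ∑ i,
        ((1/160) * Pr (prodW (fun _ : Fin n => wh N)) (fun ω => (ω i).1 = 0) -
          Pr (prodW (fun _ : Fin n => wh N)) (fun ω => (ω i).1 = 0 ∧ f (yh (S i) ω) ≠ f (xb (S i) i (ω i).2))) := by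
      simp only [X, Finset.mul_sum]
      rw [Finset.sum_comm]
      apply Finset.sum_congr rfl
      intro i _
      unfold Pr
      rw [Finset.mul_sum, ← Finset.sum_sub_distrib]
      apply Finset.sum_congr rfl
      intro ω _
      simp only [I1, I2]
      ring
    rw [e1]
    have e2 : ∀ i ∈ Finset.univ, (1/(320*M)) ≤ ((1/160) * Pr (prodW (fun _ : Fin n => wh N)) (fun ω => (ω i).1 = 0) -
          Pr (prodW (fun _ : Fin n => wh N)) (fun ω => (ω i).1 = 0 ∧ f (yh (S i) ω) ≠ f (xb (S i) i (ω i).2))) := by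
      intro i _
      have h1 := hash f hs hs1 (S i) i (hiS i) (hSc i) hN2
      rw [Pr_marg (fun _ : Fin n => wh_pr N) i (fun o => o.1 = 0), wh_bucket]
      have h2 : 5 * (s:ℝ)^2 / ((N:ℝ)+1)^2 ≤ 1/(320*M) := by
        rw [← hM, div_le_div_iff₀ (by positivity) (by positivity)]
        have : (1600:ℝ) * s^2 ≤ N := by exact_mod_cast hN
        nlinarith
      have h3 : 1/160 * (1/((N:ℝ)+1)) = 1/(320*M) + 1/(320*M) := by
        rw [← hM]; field_simp; norm_num
      rw [h3]; linarith
    refine le_trans (le_of_eq ?_) (Finset.sum_le_sum e2)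
    simp
  have hconst : ∀ ω, prodW (fun _ : Fin n => wh N) ω = (1/(2*M))^n := by
    intro ω; simp [prodW, wh, hM]
  simp_rw [hconst] at hX
  rw [← Finset.mul_sum, sum_pairs] at hX
  obtain ⟨h, hh⟩ := avg_exists (fun h : Fin n → Fin (N+1) => ∑ A : Fin n → Bool, X (fun k => (h k, A k)))
    (2^n * (n * (1/(320*M)))) (by
      simp only [Fintype.card_fun, Fintype.card_fin]
      push_cast
      rw [← hM]
      have := mul_le_mul_of_nonneg_left hX (by positivity : 0 ≤ (2*M)^n)
      have e : (2*M)^n * (1/(2*M))^n = 1 := by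
        rw [← mul_pow]
        have e0 : 2 * M * (1/(2*M)) = 1 := by field_simp
        rw [e0, one_pow]
      calc M^n * (2^n * ((n:ℝ) * (1/(320*M)))) = (2*M)^n * ((n:ℝ) * (1/(320*M))) := by
            rw [mul_pow]; ring
        _ ≤ _ := this
        _ = _ := by rw [← mul_assoc, e, one_mul])
  set J := Finset.univ.filter (fun i => h i = 0) with hJ
  have hXe : ∀ A : Fin n → Bool, X (fun k => (h k, A k)) = (J.card:ℝ)/160 -
      ((J.filter (fun i => f (yh (S i) (fun k => (h k, A k))) ≠ f (xb (S i) i (A i)))).card : ℝ) := by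
    intro A
    simp only [X, Finset.sum_sub_distrib, ← Finset.mul_sum, I1, I2]
    rw [hJ, Finset.filter_filter]
    rw [sum_ite_card Finset.univ (fun i => h i = 0) (fun _ => inferInstance),
      sum_ite_card Finset.univ (fun i => h i = 0 ∧ f (yh (S i) (fun k => (h k, A k))) ≠ f (xb (S i) i (A i))) (fun _ => inferInstance)]
    have e1 : (1/160:ℝ) * ((Finset.univ.filter (fun i => h i = 0)).card : ℝ) = ((Finset.univ.filter (fun i => h i = 0)).card:ℝ)/160 := by ring
    rw [← e1]
  simp only [hXe, Finset.sum_sub_distrib] at hh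
  simp only [Finset.sum_const, Finset.card_univ, Fintype.card_fun, Fintype.card_bool, Fintype.card_fin, nsmul_eq_mul] at hh
  push_cast at hh
  have hp : (0:ℝ) < 2^n := by positivity
  have hnn : (0:ℝ) ≤ ∑ A : Fin n → Bool, ((J.filter
        (fun i => f (yh (S i) (fun k => (h k, A k))) ≠ f (xb (S i) i (A i)))).card : ℝ) :=
    Finset.sum_nonneg fun _ _ => by positivity
  refine ⟨h, ?_, ?_⟩
  · have h1 : (2:ℝ)^n * (n * (1/(320*M))) ≤ 2^n * (J.card/160) := by linarith
    have h2 := le_of_mul_le_mul_left h1 hp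
    have h3 : (n:ℝ) ≤ 2 * M * J.card := by
      rw [mul_one_div, div_le_div_iff₀ (by positivity) (by norm_num)] at h2
      linarith
    rw [hM] at h3
    exact_mod_cast h3
  · have : (0:ℝ) ≤ 2^n * (n * (1/(320*M))) := by positivity
    linarith

lemma main_bound {n : ℕ} (f : (Fin n → Bool) → Bool) (hf : TrulyVariate f) (s : ℕ)
    (hs : sensitivity f ≤ s) (hs1 : 1 ≤ s) :
    n ≤ 80 * (1600 * s^2 + 1) * (1600 * s^2 + 2) ^ (88 * pdeg (1/3) f) := by
  set d := 88 * pdeg (1/3) f with hd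
  set N := 1600 * s^2 with hN
  choose S hS1 hS2 hS3 using simon f hf
  obtain ⟨h, hJn, hfail⟩ := hashJ (N := N) f hs hs1 S hS1 (fun i => (hS2 i).trans (by omega)) le_rfl
  set J := Finset.univ.filter (fun i => h i = 0) with hJ
  by_contra hcon
  push Not at hcon
  have hJ40 : 40 * (N+2)^d ≤ J.card := by
    by_contra h2
    push Not at h2
    have : 2 * (N+1) * J.card ≤ 2 * (N+1) * (40 * (N+2)^d) := Nat.mul_le_mul_left _ h2.le
    have e : 2 * (N+1) * (40 * (N+2)^d) = 80 * (N+1) * (N+2)^d := by ring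
    omega
  have hJ1 : 40 ≤ J.card := by
    have : 1 ≤ (N+2)^d := Nat.one_le_pow _ _ (by omega)
    omega
  obtain ⟨Ω, _, w, F, hw, hF, hFe⟩ := (HasRF.pdeg f).amp 44
  let Y : (Fin n → Bool) → Fin n → (Fin n → Bool) := fun A i => yh (S i) (fun k => (h k, A k))
  -- choose a good polynomial for each A
  have hsel : ∀ A : Fin n → Bool, ∃ ω, ((J.filter (fun i => F ω (Y A i) ≠ br (f (Y A i)))).card : ℝ) ≤ J.card / 160 := by
    intro A
    apply avg_exists_w hw
    have e : ∑ ω, w ω * ((J.filter (fun i => F ω (Y A i) ≠ br (f (Y A i)))).card : ℝ)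
        = ∑ i ∈ J, Pr w (fun ω => F ω (Y A i) ≠ br (f (Y A i))) := by
      unfold Pr
      rw [Finset.sum_comm]
      apply Finset.sum_congr rfl
      intro ω _
      rw [← Finset.mul_sum]
      congr 1
      exact (sum_ite_card J (fun i => F ω (Y A i) ≠ br (f (Y A i))) _).symm
    rw [e]
    refine (Finset.sum_le_sum fun i _ => hFe (Y A i)).trans ?_
    rw [Finset.sum_const, nsmul_eq_mul]
    have : ((8:ℝ)/9)^44 ≤ 1/160 := by norm_num
    nlinarith [(Nat.cast_nonneg J.card : (0:ℝ) ≤ J.card)]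
  choose ch hch using hsel
  let vec : (Fin n → Bool) → Fin n → ℝ := fun A i => F (ch A) (Y A i)
  let v : Fin n → Bool → ℝ := fun i b => br (f (xb (S i) i b))
  have hv : ∀ i, v i true ≠ v i false := by
    intro i
    have := hS3 i
    simp only [v]
    revert this
    generalize f (xb (S i) i true) = x
    generalize f (xb (S i) i false) = y
    cases x <;> cases y <;> simp [br]
  let err : (Fin n → Bool) → ℕ := fun A => (J.filter (fun i => vec A i ≠ v i (A i))).card
  have herr1 : ∀ A, (err A : ℝ) ≤ J.card / 160 +
      ((J.filter (fun i => f (yh (S i) (fun k => (h k, A k))) ≠ f (xb (S i) i (A i)))).card : ℝ) := by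
    intro A
    have hsub : J.filter (fun i => vec A i ≠ v i (A i)) ⊆
        J.filter (fun i => F (ch A) (Y A i) ≠ br (f (Y A i))) ∪
        J.filter (fun i => f (yh (S i) (fun k => (h k, A k))) ≠ f (xb (S i) i (A i))) := by
      intro i hi
      simp only [Finset.mem_filter, Finset.mem_union] at hi ⊢
      by_contra hc
      simp only [not_or, not_and, not_not] at hc
      apply hi.2
      simp only [vec, v]
      rw [hc.1 hi.1]
      simp only [Y]
      rw [hc.2 hi.1]
    have h1 := (Finset.card_le_card hsub).trans (Finset.card_union_le _ _)
    have h2 : (err A : ℝ) ≤ ((J.filter (fun i => F (ch A) (Y A i) ≠ br (f (Y A i)))).card : ℝ) +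
        ((J.filter (fun i => f (yh (S i) (fun k => (h k, A k))) ≠ f (xb (S i) i (A i)))).card : ℝ) := by
      exact_mod_cast h1
    have h3 := hch A
    linarith
  have hsum : ∑ A : Fin n → Bool, (err A : ℝ) ≤ 2^n * (J.card / 80) := by
    refine (Finset.sum_le_sum fun A _ => herr1 A).trans ?_
    rw [Finset.sum_add_distrib, Finset.sum_const, Finset.card_univ]
    simp only [Fintype.card_fun, Fintype.card_bool, Fintype.card_fin, nsmul_eq_mul]
    push_cast
    linarith
  let Good := Finset.univ.filter (fun A : Fin n → Bool => 40 * err A ≤ J.card)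
  have hgood : 2^n ≤ 2 * Good.card := by
    have hJp : (0:ℝ) < J.card := by
      have : 0 < J.card := by omega
      exact_mod_cast this
    have h1 : ∀ A ∈ (Finset.univ : Finset (Fin n → Bool)), (J.card / 40 : ℝ) * (1 - (if 40 * err A ≤ J.card then (1:ℝ) else 0)) ≤ err A := by
      intro A _
      split_ifs with hA
      · simp
      · have : (J.card : ℝ) ≤ 40 * err A := by
          exact_mod_cast (not_le.1 hA).le
        linarith
    have h2 := (Finset.sum_le_sum h1).trans hsum
    rw [← Finset.mul_sum, Finset.sum_sub_distrib, Finset.sum_boole] at h2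
    simp only [Finset.sum_const, Finset.card_univ, Fintype.card_fun, Fintype.card_bool, Fintype.card_fin, nsmul_eq_mul, mul_one] at h2
    push_cast at h2
    have h3 : (J.card:ℝ) * ((2:ℝ)^n - Good.card) ≤ J.card * (2^n / 2) := by
      have : (J.card / 40 : ℝ) * (2^n - Good.card) ≤ 2^n * (J.card / 80) := h2
      linarith
    have h4 := le_of_mul_le_mul_left h3 hJp
    have h5 : (2:ℝ)^n ≤ 2 * Good.card := by linarith
    exact_mod_cast h5
  -- the low-dimensional space
  let ev : ((Fin (N+1) → Bool) → ℝ) →ₗ[ℝ] (Fin n → ℝ) :=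
    LinearMap.funLeft ℝ ℝ (fun i : Fin n => fun b : Fin (N+1) => decide (∃ k ∈ S i, h k = b))
  let W0 : Submodule ℝ ((Fin (N+1) → Bool) → ℝ) := Submodule.span ℝ (Set.range (fun (g : Fin d → Option (Fin (N+1))) (z : Fin (N+1) → Bool) =>
      ∏ j, (g j).elim 1 (fun b => br (z b))))
  have hW0 : Module.finrank ℝ W0 ≤ (N+2)^d := by
    have := finrank_range_le_card (R := ℝ) (fun (g : Fin d → Option (Fin (N+1))) (z : Fin (N+1) → Bool) =>
      ∏ j, (g j).elim 1 (fun b => br (z b)))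
    refine this.trans (le_of_eq ?_)
    simp
  have hWr : Module.finrank ℝ (W0.map ev) ≤ (N+2)^d := (Submodule.finrank_map_le ev W0).trans hW0
  have hvec : ∀ A ∈ Good, vec A ∈ W0.map ev := by
    intro A _
    let yz : (Fin (N+1) → Bool) → Fin n → Bool := fun z l => if h l = 0 then A l else z (h l)
    refine ⟨fun z => F (ch A) (yz z), ?_, ?_⟩
    · apply lowdeg_span
      refine ((hF (ch A)).mono (by omega)).subst yz ?_
      intro l
      by_cases hl : h l = 0
      · simpa [yz, hl] using LowDeg.const 1 (br (A l))
      · simpa [yz, hl] using LowDeg.var (h l)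
    · funext i
      simp only [ev, LinearMap.funLeft_apply, vec, Y]
      rfl
  have hcount := decode_count J (W0.map ev) (by omega) Good v hv vec hvec (by
    intro A hA
    exact (Finset.mem_filter.1 hA).2)
  set Z := (J.powerset.filter (fun T => 40 * T.card ≤ J.card)).card with hZ
  have hZ5 : Z^5 ≤ 2^J.card := small_sets J
  have hJle : J.card ≤ n := (Finset.card_le_univ _).trans (by simp)
  have c1 : 2^J.card ≤ 2 * Z^3 := by
    have h1 : 2^(n - J.card) * 2^J.card ≤ 2^(n-J.card) * (2 * Z^3) := by
      rw [← pow_add, Nat.sub_add_cancel hJle]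
      calc 2^n ≤ 2 * Good.card := hgood
        _ ≤ 2 * (2^(n-J.card) * Z^3) := Nat.mul_le_mul_left _ hcount
        _ = _ := by ring
    exact Nat.le_of_mul_le_mul_left h1 (by positivity)
  have c2 : (2^J.card)^5 ≤ 32 * (2^J.card)^3 := by
    calc (2^J.card)^5 ≤ (2 * Z^3)^5 := Nat.pow_le_pow_left c1 5
      _ = 32 * (Z^5)^3 := by ring
      _ ≤ 32 * (2^J.card)^3 := Nat.mul_le_mul_left _ (Nat.pow_le_pow_left hZ5 3)
  have c3 : 2^(2*J.card) * 2^(3*J.card) ≤ 2^5 * 2^(3*J.card) := by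
    rw [← pow_add]
    calc 2^(2*J.card + 3*J.card) = (2^J.card)^5 := by rw [← pow_mul]; congr 1; ring
      _ ≤ 32 * (2^J.card)^3 := c2
      _ = _ := by rw [← pow_mul, mul_comm J.card 3]; norm_num
  have c4 : 2^(2*J.card) ≤ 2^5 := Nat.le_of_mul_le_mul_right c3 (by positivity)
  have c5 := (Nat.pow_le_pow_iff_right (by norm_num : 1 < 2)).1 c4
  omega


lemma sens_pos {n : ℕ} (hn : 0 < n) (f : (Fin n → Bool) → Bool) (hf : TrulyVariate f) :
    ∃ a : Fin n → Bool, ∃ i, f (flip a i) ≠ f a := by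
  obtain ⟨a, ha0⟩ := hf ⟨0, hn⟩
  refine ⟨a, ⟨0, hn⟩, ?_⟩
  unfold flip
  convert ha0

lemma one_le_sens {n : ℕ} (hn : 0 < n) (f : (Fin n → Bool) → Bool) (hf : TrulyVariate f) :
    1 ≤ sensitivity f := by
  obtain ⟨a, i, h⟩ := sens_pos hn f hf
  refine le_trans ?_ (sens_le f a)
  rw [Nat.one_le_iff_ne_zero, ← Nat.pos_iff_ne_zero, Finset.card_pos]
  exact ⟨i, by simp [h]⟩

lemma one_le_pdeg {n : ℕ} (hn : 0 < n) (f : (Fin n → Bool) → Bool) (hf : TrulyVariate f) :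
    1 ≤ pdeg (1/3) f := by
  by_contra hcon
  have h0 : pdeg (1/3) f = 0 := by omega
  obtain ⟨a, i, h⟩ := sens_pos hn f hf
  obtain ⟨Ω, _, w, F, hw, hF, hFe⟩ := HasRF.pdeg f
  rw [h0] at hF
  have h1 := hFe a
  have h2 := hFe (flip a i)
  have h3 : Pr w (fun _ => True) ≤ Pr w (fun ω => F ω a ≠ br (f a) ∨ F ω (flip a i) ≠ br (f (flip a i))) := by
    apply Pr_mono hw
    intro ω _
    obtain ⟨P, hP, hPe⟩ := hF ω
    have hc : F ω a = F ω (flip a i) := by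
      rw [← hPe, ← hPe, MvPolynomial.totalDegree_eq_zero_iff_eq_C.1 (Nat.le_zero.1 hP)]
      simp [evalBool]
    by_contra hcc
    push Not at hcc
    rw [hcc.1, hcc.2] at hc
    revert h hc
    generalize f (flip a i) = x
    generalize f a = y
    cases x <;> cases y <;> simp [br]
  have h4 := Pr_or hw (fun ω => F ω a ≠ br (f a)) (fun ω => F ω (flip a i) ≠ br (f (flip a i)))
  have h5 := Pr_true hw
  linarith

lemma n_le_pow {n : ℕ} (hn : 0 < n) (f : (Fin n → Bool) → Bool) (hf : TrulyVariate f) :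
    n ≤ (sensitivity f + 1) ^ (1164 * pdeg (1/3) f) := by
  have hs := one_le_sens hn f hf
  have hd := one_le_pdeg hn f hf
  have hm := main_bound f hf (sensitivity f) le_rfl hs
  set s := sensitivity f
  set d := pdeg (1/3) f
  have hu : 2 ≤ s + 1 := by omega
  have e1 : 2^11 ≤ (s+1)^11 := Nat.pow_le_pow_left hu 11
  have e2 : 2^7 ≤ (s+1)^7 := Nat.pow_le_pow_left hu 7
  have e3 : 1600 * s^2 + 2 ≤ (s+1)^13 := by
    calc 1600 * s^2 + 2 ≤ 2^11 * (s+1)^2 := by nlinarith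
      _ ≤ (s+1)^11 * (s+1)^2 := Nat.mul_le_mul_right _ e1
      _ = _ := by ring
  have e4 : 80 * (1600 * s^2 + 1) ≤ (s+1)^20 := by
    calc 80 * (1600 * s^2 + 1) ≤ 2^7 * (s+1)^13 := Nat.mul_le_mul (by norm_num) (by omega)
      _ ≤ (s+1)^7 * (s+1)^13 := Nat.mul_le_mul_right _ e2
      _ = _ := by ring
  calc n ≤ _ := hm
    _ ≤ (s+1)^20 * ((s+1)^13)^(88*d) := Nat.mul_le_mul e4 (Nat.pow_le_pow_left e3 _)
    _ = (s+1)^(20 + 13*(88*d)) := by rw [← pow_mul, ← pow_add]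
    _ ≤ (s+1)^(1164*d) := Nat.pow_le_pow_right (by omega) (by omega)

lemma log_n_le {n : ℕ} (hn : 0 < n) (f : (Fin n → Bool) → Bool) (hf : TrulyVariate f) :
    Real.logb 2 n ≤ 1164 * pdeg (1/3) f * Real.logb 2 ((sensitivity f : ℝ) + 1) := by
  have h := n_le_pow hn f hf
  have h1 : (n:ℝ) ≤ ((sensitivity f : ℝ) + 1) ^ (1164 * pdeg (1/3) f) := by exact_mod_cast h
  have h2 := Real.logb_le_logb_of_le (by norm_num : (1:ℝ) < 2) (by exact_mod_cast hn) h1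
  rw [Real.logb_pow] at h2
  push_cast at h2
  exact h2

lemma two_le_log {n : ℕ} (hn : 4 ≤ n) : 2 ≤ Real.logb 2 n := by
  rw [Real.le_logb_iff_rpow_le (by norm_num) (by exact_mod_cast (by omega : 0 < n))]
  norm_num
  exact_mod_cast hn

lemma one_le_loglog {n : ℕ} (hn : 4 ≤ n) : 1 ≤ Real.logb 2 (Real.logb 2 n) := by
  have := two_le_log hn
  rw [Real.le_logb_iff_rpow_le (by norm_num) (by linarith)]
  simpa using this

lemma natlog_le (n : ℕ) : (Nat.log 2 n : ℝ) ≤ Real.logb 2 n := by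
  exact_mod_cast Real.natLog_le_logb n 2

lemma OR_log {n : ℕ} (hn : 4 ≤ n) (f : (Fin n → Bool) → Bool) :
    (pdeg (1/3) (ORf (sensitivity f)) : ℝ) ≤ 8800 * pdeg (1/3) f * (Real.logb 2 (Real.logb 2 n))^2 := by
  have hL := two_le_log hn
  have hl := one_le_loglog hn
  set L := Real.logb 2 n with hLd
  set l := Real.logb 2 L with hld
  set K := Nat.log 2 n + 2 with hK
  set Q := Nat.log 2 K + 2 with hQ
  have hQK : 2 * K ≤ 2^Q := by
    have := Nat.lt_pow_succ_log_self (by norm_num : 1 < 2) K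
    rw [hQ, pow_succ]
    simp only [Nat.succ_eq_add_one] at this
    omega
  have hb := OR_bound f K Q le_rfl hQK
  have hQl : (Q:ℝ) ≤ 4 * l := by
    have h1 := natlog_le K
    have h2 : (K:ℝ) ≤ 2 * L := by
      have := natlog_le n
      rw [hK]; push_cast; linarith
    have h3 : Real.logb 2 K ≤ Real.logb 2 (2 * L) :=
      Real.logb_le_logb_of_le (by norm_num) (by rw [hK]; positivity) h2
    rw [Real.logb_mul (by norm_num) (by linarith), Real.logb_self_eq_one (by norm_num)] at h3
    rw [hQ]; push_cast; linarith
  have hb2 : (pdeg (1/3) (ORf (sensitivity f)) : ℝ) ≤ 11*((Q+1)*(2*(12*Q+32)*pdeg (1/3) f)) := by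
    exact_mod_cast hb
  refine hb2.trans ?_
  have hd : (0:ℝ) ≤ pdeg (1/3) f := by positivity
  have h5 : ((Q:ℝ)+1) * (12*Q+32) ≤ (5*l) * (80*l) :=
    mul_le_mul (by linarith) (by linarith) (by positivity) (by linarith)
  nlinarith [mul_le_mul_of_nonneg_right h5 hd]

lemma final_calc (c a : ℝ) (hc : 0 < c) (ha : 0 < a) (L d t l : ℝ) (hL : 2 ≤ L) (hd : 1 ≤ d) (ht : 1 ≤ t)
    (hl : 1 ≤ l) (h1 : L ≤ 2328 * d * t) (h2 : a * t^c ≤ 8800 * d * l^2) :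
    L^(c/(c+1)) ≤ ((2328:ℝ)^c * (8800/a))^(1/(c+1)) * (d * l^2) := by
  have hc1 : 0 < c + 1 := by linarith
  set D := (2328:ℝ)^c * (8800/a) with hD
  have hD0 : 0 < D := by positivity
  have hd0 : 0 < d := by linarith
  have hl0 : 0 < l := by linarith
  have hl2 : 1 ≤ l^2 := by nlinarith
  have key : L^c ≤ D * (d * l^2)^(c+1) := by
    have e1 : L^c ≤ (2328 * d * t)^c := Real.rpow_le_rpow (by linarith) h1 hc.le
    rw [Real.mul_rpow (by positivity) (by linarith), Real.mul_rpow (by norm_num) (by linarith)] at e1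
    have e2 : t^c ≤ 8800/a * (d * l^2) := by
      rw [div_mul_eq_mul_div, le_div_iff₀ ha]; linarith
    have e3 : d^c * (d * l^2) ≤ (d*l^2)^(c+1) := by
      rw [Real.rpow_add (by positivity), Real.rpow_one]
      apply mul_le_mul_of_nonneg_right _ (by positivity)
      exact Real.rpow_le_rpow hd0.le (by nlinarith) hc.le
    calc L^c ≤ 2328^c * d^c * t^c := e1
      _ ≤ 2328^c * d^c * (8800/a * (d * l^2)) := mul_le_mul_of_nonneg_left e2 (by positivity)
      _ = D * (d^c * (d * l^2)) := by rw [hD]; ring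
      _ ≤ _ := mul_le_mul_of_nonneg_left e3 hD0.le
  have e4 := Real.rpow_le_rpow (by positivity) key (by positivity : 0 ≤ 1/(c+1))
  rw [← Real.rpow_mul (by linarith), mul_one_div, Real.mul_rpow hD0.le (by positivity),
    ← Real.rpow_mul (by positivity), mul_one_div, div_self hc1.ne', Real.rpow_one] at e4
  exact e4

theorem final (c a : ℝ) (hc : 0 < c) (ha : 0 < a)
    (hOR : ∀ m : ℕ, 2 ≤ m → a * (Real.logb 2 m) ^ c ≤ (pdeg (1/3) (ORf m) : ℝ)) :
    ∃ a' : ℝ, 0 < a' ∧ ∀ n : ℕ, 4 ≤ n →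
      ∀ f : (Fin n → Bool) → Bool, TrulyVariate f →
        a' * (Real.logb 2 n) ^ (c / (c + 1)) / (Real.logb 2 (Real.logb 2 n)) ^ 2
          ≤ (pdeg (1/3) f : ℝ) := by
  set E := ((2328:ℝ)^c * (8800/a))^(1/(c+1)) with hE
  have hE0 : 0 < E := by positivity
  refine ⟨1/(1164 + E), by positivity, ?_⟩
  intro n hn f hf
  have hn0 : 0 < n := by omega
  have hs := one_le_sens hn0 f hf
  have hd : (1:ℝ) ≤ pdeg (1/3) f := by exact_mod_cast one_le_pdeg hn0 f hf
  have hL := two_le_log hn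
  have hl := one_le_loglog hn
  have h1 := log_n_le hn0 f hf
  have h2 := OR_log hn f
  set L := Real.logb 2 n
  set l := Real.logb 2 L
  set d : ℝ := (pdeg (1/3) f : ℝ)
  set s := sensitivity f
  have hl2 : 1 ≤ l^2 := by nlinarith
  have main : L^(c/(c+1)) ≤ (1164 + E) * (d * l^2) := by
    have hdl : 0 ≤ d * l^2 := by positivity
    rcases Nat.lt_or_ge s 2 with h | h
    · have hs1 : s = 1 := by omega
      rw [hs1] at h1
      have e : Real.logb 2 (((1:ℕ):ℝ)+1) = 1 := by
        norm_num
      rw [e] at h1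
      have e2 : L^(c/(c+1)) ≤ L := by
        calc L^(c/(c+1)) ≤ L^(1:ℝ) := Real.rpow_le_rpow_of_exponent_le (by linarith) (by
              rw [div_le_one (by linarith)]; linarith)
          _ = L := Real.rpow_one L
      nlinarith [mul_nonneg hE0.le hdl]
    · have hsR : (2:ℝ) ≤ s := by exact_mod_cast h
      have ht : 1 ≤ Real.logb 2 s := by
        rw [Real.le_logb_iff_rpow_le (by norm_num) (by linarith)]
        simpa using hsR
      have hs2 : Real.logb 2 ((s:ℝ)+1) ≤ 2 * Real.logb 2 s := by
        have : (2:ℝ) * Real.logb 2 s = Real.logb 2 ((s:ℝ)^2) := by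
          rw [Real.logb_pow]; norm_num
        rw [this]
        exact Real.logb_le_logb_of_le (by norm_num) (by linarith) (by nlinarith)
      have h3 : L ≤ 2328 * d * Real.logb 2 s := by
        have := mul_le_mul_of_nonneg_left hs2 (by linarith : 0 ≤ 1164 * d)
        linarith
      have := final_calc c a hc ha L d (Real.logb 2 s) l hL hd ht hl h3 ((hOR s h).trans h2)
      rw [← hE] at this
      nlinarith
  rw [div_le_iff₀ (by positivity), one_div, ← div_eq_inv_mul, div_le_iff₀ (by positivity)]
  linarith


end

end SLB

theorem sharper_lower_bound (c a : ℝ) (hc : 0 < c) (ha : 0 < a)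
    (hOR : ∀ m : ℕ, 2 ≤ m → a * (Real.logb 2 m) ^ c ≤ (pdeg (1/3) (ORf m) : ℝ)) :
    ∃ a' : ℝ, 0 < a' ∧ ∀ n : ℕ, 4 ≤ n →
      ∀ f : (Fin n → Bool) → Bool, TrulyVariate f →
        a' * (Real.logb 2 n) ^ (c / (c + 1)) / (Real.logb 2 (Real.logb 2 n)) ^ 2
          ≤ (pdeg (1/3) f : ℝ) := by
  exact SLB.final c a hc ha hOR
end
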